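/- For all integers 0 < d < n and every M < +∞, there exist ε > 0 (depending only on n, d) and C ≥ 1 (depending only on n, d, M) with the following property. Let E ⊆ ℝ^n be a closed set containing the origin such that for every x ∈ E ∩ B(0,10) and every 0 < r ≤ 10 there is a d-dimensional affine plane P(x,r) containing x with dist(y,P(x,r)) ≤ εr for all y ∈ E ∩ B(x,r) and dist(y,E) ≤ εr for all y ∈ P(x,r) ∩ B(x,r). Assume in addition that J_∞(x) ≤ M for all x ∈ E ∩ B(0,10). Then there is a bijective map g : ℝ^n → ℝ^n such that E ∩ B(0,1) = g(P(0,10)) ∩ B(0,1) and C⁻¹|x−y| ≤ |g(x) − g(y)| ≤ C|x−y| for all x, y ∈ ℝ^n. (Theorem 1.13.) -/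

import Mathlib

open Metric Set

noncomputable section

/-- `ℝⁿ`. -/
abbrev V (n : ℕ) := EuclideanSpace ℝ (Fin n)

/-- `P` is a `d`-dimensional affine plane of `ℝⁿ`. -/
def IsAffinePlane (n d : ℕ) (P : Set (V n)) : Prop :=
  ∃ Q : AffineSubspace ℝ (V n), (Q : Set (V n)) = P ∧
    Module.finrank ℝ Q.direction = d ∧ (Q : Set (V n)).Nonempty

/-- The Jones number `β_∞(x,r)`: the normalized infimum, over `d`-planes `P`
through `x`, of the sup of `dist(y,P)` over `y ∈ E ∩ B(x,r)`. -/
def betaInf (n d : ℕ) (E : Set (V n)) (x : V n) (r : ℝ) : ℝ :=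
  r⁻¹ * sInf { s : ℝ | ∃ P : Set (V n), IsAffinePlane n d P ∧ x ∈ P ∧
    s = ⨆ y ∈ E ∩ ball x r, infDist y P }

section Diffeo

variable {H : Type*} [NormedAddCommGroup H] [NormedSpace ℝ H] [FiniteDimensional ℝ H]

/-- A bijective differentiable map whose inverse is Lipschitz and whose derivative is bounded below
by `C⁻¹` has a differentiable inverse. -/
theorem hasFDerivAt_inverse {f φ : H → H} {C : ℝ} (hf : Differentiable ℝ f)
    (hlow : ∀ z h, ‖h‖ ≤ C * ‖fderiv ℝ f z h‖) (hφ : Continuous φ) (hfφ : ∀ y, f (φ y) = y)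
    (y : H) : ∃ T : H →L[ℝ] H, HasFDerivAt φ T y ∧ ∀ w, fderiv ℝ f (φ y) (T w) = w := by
  have hker : Function.Injective (fderiv ℝ f (φ y)) := by
    intro a b hab
    have h := hlow (φ y) (a - b)
    rw [map_sub, hab, sub_self, norm_zero, mul_zero] at h
    exact sub_eq_zero.1 (norm_le_zero_iff.1 h)
  let e : H ≃ₗ[ℝ] H := LinearEquiv.ofInjectiveEndo (fderiv ℝ f (φ y) : H →ₗ[ℝ] H) hker
  have he : ((e.toContinuousLinearEquiv : H ≃L[ℝ] H) : H →L[ℝ] H) = fderiv ℝ f (φ y) := by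
    ext v; rfl
  refine ⟨(e.toContinuousLinearEquiv.symm : H →L[ℝ] H), ?_, ?_⟩
  · refine HasFDerivAt.of_local_left_inverse hφ.continuousAt ?_ (Filter.Eventually.of_forall hfφ)
    rw [he]
    exact (hf (φ y)).hasFDerivAt
  · intro w
    rw [← he]
    exact e.toContinuousLinearEquiv.apply_symm_apply w

/-- If `f` is a homeomorphism with derivative bounded below, and `g` is a relatively small `C¹`
perturbation of `f`, then `g` is a homeomorphism. -/
theorem exists_inverse_of_fderiv_close {f φ g : H → H} {C : ℝ} (hf : Differentiable ℝ f)
    (hlow : ∀ z h, ‖h‖ ≤ C * ‖fderiv ℝ f z h‖) (hφ : Continuous φ) (hfφ : ∀ y, f (φ y) = y)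
    (hφf : ∀ z, φ (f z) = z) (hg : Differentiable ℝ g)
    (hclose : ∀ z h, ‖fderiv ℝ g z h - fderiv ℝ f z h‖ ≤ 1 / 2 * ‖fderiv ℝ f z h‖) :
    ∃ ψ : H → H, Continuous ψ ∧ (∀ y, g (ψ y) = y) ∧ ∀ z, ψ (g z) = z := by
  have hlip : LipschitzWith (1 / 2) (fun y => g (φ y) - y) := by
    choose T hT hTw using hasFDerivAt_inverse hf hlow hφ hfφ
    have hder : ∀ y, HasFDerivAt (fun y => g (φ y) - y)
        ((fderiv ℝ g (φ y)).comp (T y) - ContinuousLinearMap.id ℝ H) y := fun y =>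
      (((hg (φ y)).hasFDerivAt).comp y (hT y)).sub (hasFDerivAt_id y)
    refine lipschitzWith_of_nnnorm_fderiv_le (𝕜 := ℝ) (fun y => (hder y).differentiableAt) ?_
    intro y
    rw [(hder y).fderiv, ← NNReal.coe_le_coe, coe_nnnorm]
    refine ContinuousLinearMap.opNorm_le_bound _ (by positivity) fun w => ?_
    have h := hclose (φ y) (T y w)
    rw [hTw] at h
    simpa using h
  have happ : ApproximatesLinearOn (fun y => g (φ y))
      ((ContinuousLinearEquiv.refl ℝ H : H ≃L[ℝ] H) : H →L[ℝ] H) univ (1 / 2) := by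
    rw [ApproximatesLinearOn.approximatesLinearOn_iff_lipschitzOnWith]
    exact hlip.lipschitzOnWith
  have hc : Subsingleton H ∨
      (1 / 2 : NNReal) < ‖((ContinuousLinearEquiv.refl ℝ H).symm : H →L[ℝ] H)‖₊⁻¹ := by
    rcases subsingleton_or_nontrivial H with hs | hs
    · exact Or.inl hs
    · right
      have : ‖((ContinuousLinearEquiv.refl ℝ H).symm : H →L[ℝ] H)‖₊ = 1 := by
        ext
        exact ContinuousLinearMap.norm_id
      rw [this, ← NNReal.coe_lt_coe]
      norm_num
  let Φ := happ.toHomeomorph _ hc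
  have hΦ : ∀ y, Φ y = g (φ y) := fun y => rfl
  refine ⟨fun y => φ (Φ.symm y), hφ.comp Φ.symm.continuous, fun y => ?_, fun z => ?_⟩
  · rw [← hΦ, Φ.apply_symm_apply]
  · have : g z = Φ (f z) := by rw [hΦ, hφf]
    simp only [this, Φ.symm_apply_apply, hφf]

/-- A chain of relatively small perturbations of the identity, with uniform two-sided derivative
bounds, consists of uniformly bi-Lipschitz bijections. -/
theorem bijective_bilipschitz_of_chain {g : ℕ → H → H} {C : ℝ} (hC : 0 ≤ C) (h0 : g 0 = id)
    (hg : ∀ k, Differentiable ℝ (g k))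
    (hup : ∀ k z h, ‖fderiv ℝ (g k) z h‖ ≤ C * ‖h‖)
    (hlow : ∀ k z h, ‖h‖ ≤ C * ‖fderiv ℝ (g k) z h‖)
    (hclose : ∀ k z h,
      ‖fderiv ℝ (g (k + 1)) z h - fderiv ℝ (g k) z h‖ ≤ 1 / 2 * ‖fderiv ℝ (g k) z h‖) (k : ℕ) :
    Function.Surjective (g k) ∧
      ∀ x y, ‖g k x - g k y‖ ≤ C * ‖x - y‖ ∧ ‖x - y‖ ≤ C * ‖g k x - g k y‖ := by
  have hinv : ∀ k, ∃ ψ : H → H, Continuous ψ ∧ (∀ y, g k (ψ y) = y) ∧ ∀ z, ψ (g k z) = z := by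
    intro k
    induction k with
    | zero => exact ⟨id, continuous_id, by simp [h0], by simp [h0]⟩
    | succ k ih =>
      obtain ⟨φ, hφ, h1, h2⟩ := ih
      exact exists_inverse_of_fderiv_close (hg k) (hlow k) hφ h1 h2 (hg (k + 1)) (hclose k)
  obtain ⟨ψ, hψ, h1, h2⟩ := hinv k
  refine ⟨fun y => ⟨ψ y, h1 y⟩, fun x y => ⟨?_, ?_⟩⟩
  · exact Convex.norm_image_sub_le_of_norm_fderiv_le (𝕜 := ℝ) (s := univ)
      (fun z _ => hg k z)
      (fun z _ => ContinuousLinearMap.opNorm_le_bound _ hC (hup k z)) convex_univ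
      (mem_univ _) (mem_univ _)
  · choose T hT hTw using hasFDerivAt_inverse (hg k) (hlow k) hψ h1
    have := Convex.norm_image_sub_le_of_norm_hasFDerivWithin_le (𝕜 := ℝ) (s := univ) (f := ψ)
      (fun z _ => (hT z).hasFDerivWithinAt)
      (fun z _ => ContinuousLinearMap.opNorm_le_bound _ hC (fun w => by
        have := hlow k (ψ z) (T z w)
        rwa [hTw] at this)) convex_univ (mem_univ (g k y)) (mem_univ (g k x))
    rwa [h2, h2] at this

/-- A geometrically convergent sequence of uniformly bi-Lipschitz surjections converges to a
bi-Lipschitz surjection. -/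
theorem exists_limit_bilipschitz {g : ℕ → H → H} {C c : ℝ} (hc : 0 ≤ c)
    (hsurj : ∀ k, Function.Surjective (g k))
    (hbil : ∀ k x y, ‖g k x - g k y‖ ≤ C * ‖x - y‖ ∧ ‖x - y‖ ≤ C * ‖g k x - g k y‖)
    (hstep : ∀ k z, ‖g (k + 1) z - g k z‖ ≤ c / 10 ^ k) :
    ∃ G : H → H, Function.Surjective G ∧
      (∀ x y, ‖G x - G y‖ ≤ C * ‖x - y‖ ∧ ‖x - y‖ ≤ C * ‖G x - G y‖) ∧
      ∀ k z, ‖G z - g k z‖ ≤ 2 * c / 10 ^ k := by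
  have hstep' : ∀ z k, dist (g k z) (g (k + 1) z) ≤ c * (1 / 10) ^ k := by
    intro z k
    rw [dist_comm, dist_eq_norm]
    simpa [div_eq_mul_inv] using hstep k z
  have hlim : ∀ z, ∃ y, Filter.Tendsto (fun k => g k z) Filter.atTop (nhds y) := fun z =>
    cauchySeq_tendsto_of_complete
      (cauchySeq_of_le_geometric (1 / 10) c (by norm_num) (hstep' z))
  choose G hG using hlim
  have hdist : ∀ k z, ‖G z - g k z‖ ≤ 2 * c / 10 ^ k := by
    intro k z
    have h := dist_le_of_le_geometric_of_tendsto (1 / 10) c (by norm_num) (hstep' z) (hG z) k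
    rw [dist_comm, dist_eq_norm] at h
    refine h.trans ?_
    rw [div_pow, one_pow, mul_one_div, div_div, div_le_div_iff₀ (by positivity) (by positivity)]
    have : (0 : ℝ) < 10 ^ k := by positivity
    nlinarith [mul_nonneg hc this.le]
  have hbilG : ∀ x y, ‖G x - G y‖ ≤ C * ‖x - y‖ ∧ ‖x - y‖ ≤ C * ‖G x - G y‖ := by
    intro x y
    have ht : Filter.Tendsto (fun k => ‖g k x - g k y‖) Filter.atTop (nhds ‖G x - G y‖) :=
      ((hG x).sub (hG y)).norm
    exact ⟨le_of_tendsto' ht fun k => (hbil k x y).1,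
      ge_of_tendsto' (ht.const_mul C) fun k => (hbil k x y).2⟩
  refine ⟨G, fun y => ?_, hbilG, hdist⟩
  choose x hx using fun k => hsurj k y
  have hpow : Filter.Tendsto (fun k : ℕ => 2 * c / (10 : ℝ) ^ k) Filter.atTop (nhds 0) := by
    have := (tendsto_pow_atTop_nhds_zero_of_lt_one (r := (1 / 10 : ℝ)) (by norm_num)
      (by norm_num)).const_mul (2 * c)
    simpa [div_eq_mul_inv] using this
  have hGx : Filter.Tendsto (fun k => G (x k)) Filter.atTop (nhds y) := by
    rw [tendsto_iff_norm_sub_tendsto_zero]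
    refine squeeze_zero (fun _ => norm_nonneg _) (fun k => ?_) hpow
    have := hdist k (x k)
    rwa [hx] at this
  have hcl : IsClosed (range G) := by
    have hanti : AntilipschitzWith C.toNNReal G := by
      refine AntilipschitzWith.of_le_mul_dist fun a b => ?_
      rw [dist_eq_norm, dist_eq_norm]
      exact ((hbilG a b).2).trans
        (mul_le_mul_of_nonneg_right (Real.le_coe_toNNReal C) (norm_nonneg _))
    have hlipG : LipschitzWith C.toNNReal G := by
      refine LipschitzWith.of_dist_le_mul fun a b => ?_
      rw [dist_eq_norm, dist_eq_norm]
      exact ((hbilG a b).1).trans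
        (mul_le_mul_of_nonneg_right (Real.le_coe_toNNReal C) (norm_nonneg _))
    exact hanti.isClosed_range hlipG.uniformContinuous
  exact hcl.mem_of_tendsto hGx (Filter.Eventually.of_forall fun k => mem_range_self _)

end Diffeo

section Projections

variable {H : Type*} [NormedAddCommGroup H] [InnerProductSpace ℝ H] [FiniteDimensional ℝ H]

/-- The component of a vector normal to the subspace `L`. -/
def perp (L : Submodule ℝ H) : H →L[ℝ] H := ContinuousLinearMap.id ℝ H - L.starProjection

theorem perp_apply (L : Submodule ℝ H) (x : H) : perp L x = x - L.starProjection x := rfl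

theorem perp_eq_starProjection_orthogonal (L : Submodule ℝ H) : perp L = Lᗮ.starProjection := by
  ext x; rw [perp_apply, Submodule.starProjection_orthogonal_val]

theorem norm_perp_le (L : Submodule ℝ H) (x : H) : ‖perp L x‖ ≤ ‖x‖ := by
  rw [perp_eq_starProjection_orthogonal]; exact Lᗮ.norm_starProjection_apply_le x

theorem starProjection_idem (L : Submodule ℝ H) (x : H) :
    L.starProjection (L.starProjection x) = L.starProjection x :=
  Submodule.starProjection_eq_self_iff.2 (L.starProjection_apply_mem x)

theorem perp_starProjection (L : Submodule ℝ H) (x : H) : perp L (L.starProjection x) = 0 := by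
  rw [perp_apply, starProjection_idem, sub_self]

theorem starProjection_perp (L : Submodule ℝ H) (x : H) : L.starProjection (perp L x) = 0 := by
  rw [perp_apply, map_sub, starProjection_idem, sub_self]

theorem perp_perp (L : Submodule ℝ H) (x : H) : perp L (perp L x) = perp L x := by
  rw [perp_apply, starProjection_perp, sub_zero]

theorem perp_eq_zero_of_mem {L : Submodule ℝ H} {x : H} (hx : x ∈ L) : perp L x = 0 := by
  rw [perp_apply, Submodule.starProjection_eq_self_iff.2 hx, sub_self]

theorem inner_perp_right (L : Submodule ℝ H) (x y : H) :
    inner ℝ x (perp L y) = inner ℝ (perp L x) (perp L y) := by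
  conv_lhs => rw [← perp_perp L y]
  rw [perp_eq_starProjection_orthogonal]
  exact (Lᗮ.inner_starProjection_left_eq_right _ _).symm

theorem inner_starProjection_right (L : Submodule ℝ H) (x y : H) :
    inner ℝ x (L.starProjection y) = inner ℝ (L.starProjection x) (L.starProjection y) := by
  conv_lhs => rw [← starProjection_idem L y]
  exact (L.inner_starProjection_left_eq_right _ _).symm

theorem norm_perp_sub_perp (L L' : Submodule ℝ H) (x : H) :
    ‖perp L x - perp L' x‖ = ‖L.starProjection x - L'.starProjection x‖ := by
  rw [perp_apply, perp_apply, ← norm_neg]; congr 1; abel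

end Projections

section WeightedSums

variable {F ι : Type*} [NormedAddCommGroup F] [NormedSpace ℝ F]

theorem norm_sum_smul_le_sum_abs_mul {X : Finset ι} {η : ι → ℝ} {x : ι → F} {B : ℝ}
    (hx : ∀ c ∈ X, η c ≠ 0 → ‖x c‖ ≤ B) :
    ‖∑ c ∈ X, η c • x c‖ ≤ (∑ c ∈ X, |η c|) * B := by
  rw [Finset.sum_mul]
  refine norm_sum_le_of_le _ fun c hc => ?_
  rw [norm_smul, Real.norm_eq_abs]
  by_cases h : η c = 0
  · simp [h]
  · exact mul_le_mul_of_nonneg_left (hx c hc h) (abs_nonneg _)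

theorem norm_sum_smul_le_of_sum_le_one {X : Finset ι} {θ : ι → ℝ} {x : ι → F} {B : ℝ}
    (hB : 0 ≤ B) (hθ : ∀ c ∈ X, 0 ≤ θ c) (hsum : ∑ c ∈ X, θ c ≤ 1)
    (hx : ∀ c ∈ X, θ c ≠ 0 → ‖x c‖ ≤ B) :
    ‖∑ c ∈ X, θ c • x c‖ ≤ B := by
  refine (norm_sum_smul_le_sum_abs_mul hx).trans ?_
  rw [Finset.sum_congr rfl fun c hc => abs_of_nonneg (hθ c hc)]
  exact mul_le_of_le_one_left hB hsum

end WeightedSums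

section Steps

variable {H : Type*} [NormedAddCommGroup H] [InnerProductSpace ℝ H] [FiniteDimensional ℝ H]

/-- Removing a weighted average of tangential components does not increase the norm. -/
theorem norm_sub_sum_starProjection_le {X : Finset H} {L : H → Submodule ℝ H} {θ : H → ℝ}
    (hθ : ∀ c ∈ X, 0 ≤ θ c) (hsum : ∑ c ∈ X, θ c ≤ 1) (w : H) :
    ‖w - ∑ c ∈ X, θ c • (L c).starProjection w‖ ≤ ‖w‖ := by
  have h : w - ∑ c ∈ X, θ c • (L c).starProjection w
      = (1 - ∑ c ∈ X, θ c) • w + ∑ c ∈ X, θ c • perp (L c) w := by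
    simp only [perp_apply, smul_sub, Finset.sum_sub_distrib, sub_smul, one_smul, Finset.sum_smul]
    abel
  rw [h]
  refine (norm_add_le _ _).trans ?_
  rw [norm_smul, Real.norm_of_nonneg (by linarith)]
  have h2 : ‖∑ c ∈ X, θ c • perp (L c) w‖ ≤ (∑ c ∈ X, |θ c|) * ‖w‖ :=
    norm_sum_smul_le_sum_abs_mul fun c _ _ => norm_perp_le _ _
  rw [Finset.sum_congr rfl fun c hc => abs_of_nonneg (hθ c hc)] at h2
  linarith

variable {X : Finset H} {L : H → Submodule ℝ H} {Le : Submodule ℝ H} {θ : H → ℝ} {b : ℝ}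

theorem normal_step_norm_sub (hb : 0 ≤ b) (hθ : ∀ c ∈ X, 0 ≤ θ c) (hsum : ∑ c ∈ X, θ c ≤ 1)
    (hL : ∀ c ∈ X, θ c ≠ 0 → ∀ x, ‖(L c).starProjection x - Le.starProjection x‖ ≤ b * ‖x‖)
    {w : H} {m : ℝ} (hm : 0 ≤ m) (hw : ‖Le.starProjection w‖ ≤ m * b * ‖w‖) :
    ‖∑ c ∈ X, θ c • (L c).starProjection w‖ ≤ (m + 1) * b * ‖w‖ := by
  refine norm_sum_smul_le_of_sum_le_one (by positivity) hθ hsum fun c hc h => ?_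
  have := norm_le_norm_add_norm_sub' ((L c).starProjection w) (Le.starProjection w)
  linarith [hL c hc h w]

theorem normal_step_norm_sq (hb : 0 ≤ b) (hθ : ∀ c ∈ X, 0 ≤ θ c) (hsum : ∑ c ∈ X, θ c ≤ 1)
    (hL : ∀ c ∈ X, θ c ≠ 0 → ∀ x, ‖(L c).starProjection x - Le.starProjection x‖ ≤ b * ‖x‖)
    {w : H} {m : ℝ} (hm : 0 ≤ m) (hw : ‖Le.starProjection w‖ ≤ m * b * ‖w‖) :
    |‖w - ∑ c ∈ X, θ c • (L c).starProjection w‖ ^ 2 - ‖w‖ ^ 2|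
      ≤ 3 * ((m + 1) * b) ^ 2 * ‖w‖ ^ 2 := by
  have h1 := normal_step_norm_sub hb hθ hsum hL hm hw
  set D := ∑ c ∈ X, θ c • (L c).starProjection w with hD
  have h2 : |inner ℝ w D| ≤ ((m + 1) * b * ‖w‖) ^ 2 := by
    rw [hD, inner_sum, ← Real.norm_eq_abs]
    simp only [inner_smul_right]
    refine norm_sum_smul_le_of_sum_le_one (F := ℝ) (by positivity) hθ hsum fun c hc h => ?_
    rw [inner_starProjection_right, real_inner_self_eq_norm_sq, Real.norm_of_nonneg (by positivity)]
    have h3 := norm_le_norm_add_norm_sub' ((L c).starProjection w) (Le.starProjection w)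
    exact pow_le_pow_left₀ (norm_nonneg _) (by linarith [hL c hc h w]) 2
  have h3 : ‖D‖ ^ 2 ≤ ((m + 1) * b * ‖w‖) ^ 2 := pow_le_pow_left₀ (norm_nonneg _) h1 2
  rw [norm_sub_sq_real, abs_le]
  rw [abs_le] at h2
  constructor <;> nlinarith [sq_nonneg ‖D‖, sq_nonneg ((m + 1) * b * ‖w‖)]

theorem normal_step_reset (hb : 0 ≤ b) (hθ : ∀ c ∈ X, 0 ≤ θ c) (hsum : ∑ c ∈ X, θ c = 1)
    (hL : ∀ c ∈ X, θ c ≠ 0 → ∀ x, ‖(L c).starProjection x - Le.starProjection x‖ ≤ b * ‖x‖)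
    (w : H) :
    ‖Le.starProjection (w - ∑ c ∈ X, θ c • (L c).starProjection w)‖ ≤ b * ‖w‖ := by
  have h : Le.starProjection (w - ∑ c ∈ X, θ c • (L c).starProjection w)
      = ∑ c ∈ X, θ c • Le.starProjection (perp (L c) w) := by
    have h1 : w = ∑ c ∈ X, θ c • w := by rw [← Finset.sum_smul, hsum, one_smul]
    conv_lhs => enter [2, 1]; rw [h1]
    rw [← Finset.sum_sub_distrib, map_sum]
    simp only [← smul_sub, map_smul, perp_apply]
  rw [h]
  refine norm_sum_smul_le_of_sum_le_one (by positivity) hθ hsum.le fun c hc hc0 => ?_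
  have h2 : Le.starProjection (perp (L c) w) = Le.starProjection (perp (L c) w - perp Le w) := by
    rw [map_sub, starProjection_perp, sub_zero]
  rw [h2]
  refine (Le.norm_starProjection_apply_le _).trans ?_
  rw [norm_perp_sub_perp]
  exact hL c hc hc0 w

variable {η : H → ℝ} {y : H → H} {ρ κ : ℝ}

theorem norm_perp_le_of_close {L Le : Submodule ℝ H} {v : H} {m : ℝ}
    (hL : ‖L.starProjection v - Le.starProjection v‖ ≤ b * ‖v‖)
    (hv : ‖perp Le v‖ ≤ m * b * ‖v‖) : ‖perp L v‖ ≤ (m + 1) * b * ‖v‖ := by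
  have := norm_le_norm_add_norm_sub' (perp L v) (perp Le v)
  rw [norm_perp_sub_perp] at this
  linarith

theorem tangent_step_norm_sub (hb : 0 ≤ b) (hθ : ∀ c ∈ X, 0 ≤ θ c) (hsum : ∑ c ∈ X, θ c ≤ 1)
    (hL : ∀ c ∈ X, θ c ≠ 0 → ∀ x, ‖(L c).starProjection x - Le.starProjection x‖ ≤ b * ‖x‖)
    {v : H} {m : ℝ} (hm : 0 ≤ m) (hv : ‖perp Le v‖ ≤ m * b * ‖v‖) (hρ : 0 ≤ ρ)
    (hη : ∑ c ∈ X, |η c| ≤ κ * ‖v‖) (hy : ∀ c ∈ X, η c ≠ 0 → ‖y c‖ ≤ ρ) :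
    ‖∑ c ∈ X, θ c • perp (L c) v + ∑ c ∈ X, η c • y c‖ ≤ ((m + 1) * b + κ * ρ) * ‖v‖ := by
  refine (norm_add_le _ _).trans ?_
  have h1 : ‖∑ c ∈ X, θ c • perp (L c) v‖ ≤ (m + 1) * b * ‖v‖ :=
    norm_sum_smul_le_of_sum_le_one (by positivity) hθ hsum fun c hc h =>
      norm_perp_le_of_close (hL c hc h v) hv
  have h2 := (norm_sum_smul_le_sum_abs_mul hy).trans (mul_le_mul_of_nonneg_right hη hρ)
  linarith

theorem tangent_step_norm_sq (hb : 0 ≤ b) (hθ : ∀ c ∈ X, 0 ≤ θ c) (hsum : ∑ c ∈ X, θ c ≤ 1)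
    (hL : ∀ c ∈ X, θ c ≠ 0 → ∀ x, ‖(L c).starProjection x - Le.starProjection x‖ ≤ b * ‖x‖)
    {v : H} {m : ℝ} (hm : 0 ≤ m) (hv : ‖perp Le v‖ ≤ m * b * ‖v‖) (hρ : 0 ≤ ρ) (hκ : 0 ≤ κ)
    (hη : ∑ c ∈ X, |η c| ≤ κ * ‖v‖) (hy : ∀ c ∈ X, η c ≠ 0 → ‖y c‖ ≤ ρ)
    (hηθ : ∀ c ∈ X, η c ≠ 0 → θ c ≠ 0) (hyL : ∀ c ∈ X, perp (L c) (y c) = y c) :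
    |‖v - (∑ c ∈ X, θ c • perp (L c) v + ∑ c ∈ X, η c • y c)‖ ^ 2 - ‖v‖ ^ 2|
      ≤ 3 * ((m + 1) * b + κ * ρ) ^ 2 * ‖v‖ ^ 2 := by
  have h1 := tangent_step_norm_sub hb hθ hsum hL hm hv hρ hη hy
  have h2 : |inner ℝ v (∑ c ∈ X, θ c • perp (L c) v)| ≤ ((m + 1) * b * ‖v‖) ^ 2 := by
    rw [inner_sum, ← Real.norm_eq_abs]
    simp only [inner_smul_right]
    refine norm_sum_smul_le_of_sum_le_one (F := ℝ) (by positivity) hθ hsum fun c hc h => ?_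
    rw [inner_perp_right, real_inner_self_eq_norm_sq, Real.norm_of_nonneg (by positivity)]
    exact pow_le_pow_left₀ (norm_nonneg _) (norm_perp_le_of_close (hL c hc h v) hv) 2
  have h3 : |inner ℝ v (∑ c ∈ X, η c • y c)| ≤ κ * ‖v‖ * ((m + 1) * b * ‖v‖ * ρ) := by
    rw [inner_sum, ← Real.norm_eq_abs]
    simp only [inner_smul_right]
    have h4 : ‖∑ c ∈ X, η c • inner ℝ v (y c)‖
        ≤ (∑ c ∈ X, |η c|) * ((m + 1) * b * ‖v‖ * ρ) := by
      refine norm_sum_smul_le_sum_abs_mul fun c hc h => ?_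
      rw [← hyL c hc, inner_perp_right, hyL c hc]
      refine (norm_inner_le_norm _ _).trans ?_
      exact mul_le_mul (norm_perp_le_of_close (hL c hc (hηθ c hc h) v) hv) (hy c hc h)
        (norm_nonneg _) (by positivity)
    exact h4.trans (mul_le_mul_of_nonneg_right hη (by positivity))
  set D := ∑ c ∈ X, θ c • perp (L c) v
  set D' := ∑ c ∈ X, η c • y c
  have h4 : ‖D + D'‖ ^ 2 ≤ (((m + 1) * b + κ * ρ) * ‖v‖) ^ 2 :=
    pow_le_pow_left₀ (norm_nonneg _) h1 2
  rw [norm_sub_sq_real, inner_add_right, abs_le]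
  rw [abs_le] at h2 h3
  have h5 : 0 ≤ κ * ρ * ((m + 1) * b) * ‖v‖ ^ 2 := by positivity
  have h6 : 0 ≤ (κ * ρ * ‖v‖) ^ 2 := by positivity
  have h7 : 0 ≤ ‖D + D'‖ ^ 2 := by positivity
  have h8 : 0 ≤ ((m + 1) * b * ‖v‖) ^ 2 := by positivity
  constructor <;> nlinarith

theorem tangent_step_reset (hb : 0 ≤ b) (hθ : ∀ c ∈ X, 0 ≤ θ c) (hsum : ∑ c ∈ X, θ c = 1)
    (hL : ∀ c ∈ X, θ c ≠ 0 → ∀ x, ‖(L c).starProjection x - Le.starProjection x‖ ≤ b * ‖x‖)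
    {v : H} (hρ : 0 ≤ ρ) (hη : ∑ c ∈ X, |η c| ≤ κ * ‖v‖)
    (hy : ∀ c ∈ X, η c ≠ 0 → ‖y c‖ ≤ ρ) :
    ‖perp Le (v - (∑ c ∈ X, θ c • perp (L c) v + ∑ c ∈ X, η c • y c))‖
      ≤ (b + κ * ρ) * ‖v‖ := by
  have h : v - (∑ c ∈ X, θ c • perp (L c) v + ∑ c ∈ X, η c • y c)
      = ∑ c ∈ X, θ c • (L c).starProjection v - ∑ c ∈ X, η c • y c := by
    have h1 : v = ∑ c ∈ X, θ c • v := by rw [← Finset.sum_smul, hsum, one_smul]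
    rw [← sub_sub]
    conv_lhs => enter [1, 1]; rw [h1]
    rw [← Finset.sum_sub_distrib]
    simp only [← smul_sub, perp_apply, sub_sub_cancel]
  rw [h, map_sub]
  refine (norm_sub_le _ _).trans ?_
  have h1 : ‖perp Le (∑ c ∈ X, θ c • (L c).starProjection v)‖ ≤ b * ‖v‖ := by
    rw [map_sum]
    simp only [map_smul]
    refine norm_sum_smul_le_of_sum_le_one (by positivity) hθ hsum.le fun c hc hc0 => ?_
    have h2 : perp Le ((L c).starProjection v)
        = perp Le ((L c).starProjection v - Le.starProjection v) := by
      rw [map_sub, perp_starProjection, sub_zero]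
    rw [h2]
    exact (norm_perp_le _ _).trans (hL c hc hc0 v)
  have h2 := (norm_perp_le Le _).trans
    ((norm_sum_smul_le_sum_abs_mul hy).trans (mul_le_mul_of_nonneg_right hη hρ))
  linarith

end Steps

/-- Multiscale data attached to a flat set `E`: at scale `r₀ / 10 ^ k`, every `e ∈ E` carries an
approximating linear subspace `L k e`, there is a partition of unity `θ k` indexed by a finite net
`X k` of `E`, and `b e k` controls the oscillation of the subspaces near `e`. -/
structure FlatSystem (H : Type*) [NormedAddCommGroup H] [InnerProductSpace ℝ H]
    [FiniteDimensional ℝ H] (K δ M : ℝ) where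
  E : Set H
  r₀ : ℝ
  base : Submodule ℝ H
  L : ℕ → H → Submodule ℝ H
  X : ℕ → Finset H
  θ : ℕ → H → H → ℝ
  b : H → ℕ → ℝ
  χ : ℝ → ℝ
  one_le_K : 1 ≤ K
  δ_nonneg : 0 ≤ δ
  δ_mul_K_le : δ * K ≤ 1 / 10 ^ 6
  r₀_pos : 0 < r₀
  mem_of_mem_X : ∀ k, ∀ c ∈ X k, c ∈ E
  θ_diff : ∀ k c, Differentiable ℝ (θ k c)
  θ_nonneg : ∀ k c z, 0 ≤ θ k c z
  θ_sum_le : ∀ k z, ∑ c ∈ X k, θ k c z ≤ 1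
  θ_sum_eq : ∀ k z, ∀ e ∈ E, ‖z - e‖ ≤ 10 * (r₀ / 10 ^ k) → ∑ c ∈ X k, θ k c z = 1
  θ_supp : ∀ k z, ∀ c ∈ X k, θ k c z ≠ 0 → ‖z - c‖ ≤ 40 * (r₀ / 10 ^ k)
  θ_deriv : ∀ k z v, ∑ c ∈ X k, |fderiv ℝ (θ k c) z v| ≤ K / (r₀ / 10 ^ k) * ‖v‖
  χ_diff : Differentiable ℝ χ
  χ_nonneg : ∀ x, 0 ≤ χ x
  χ_le_one : ∀ x, χ x ≤ 1
  χ_eq_one : ∀ x, x ≤ 9 / 16 → χ x = 1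
  χ_eq_zero : ∀ x, 1 ≤ x → χ x = 0
  χ_deriv : ∀ x, |deriv χ x| ≤ K
  b_nonneg : ∀ e ∈ E, ∀ k, 0 ≤ b e k
  b_le : ∀ e ∈ E, ∀ k, b e k ≤ δ
  b_le_two_mul : ∀ e ∈ E, ∀ k, b e k ≤ 2 * b e (k + 1)
  b_sq_sum_le : ∀ e ∈ E, ∀ N, ∑ k ∈ Finset.range N, b e k ^ 2 ≤ M
  proj_close : ∀ e ∈ E, ∀ c ∈ E, ∀ k, ‖c - e‖ ≤ 100 * (r₀ / 10 ^ k) → ∀ x,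
    ‖(L k c).starProjection x - (L k e).starProjection x‖ ≤ b e k * ‖x‖
  flat : ∀ e ∈ E, ∀ c ∈ E, ∀ k, ‖c - e‖ ≤ 100 * (r₀ / 10 ^ k) →
    ‖perp (L k e) (c - e)‖ ≤ b e k * (r₀ / 10 ^ k)
  proj_succ : ∀ e ∈ E, ∀ k x,
    ‖(L (k + 1) e).starProjection x - (L k e).starProjection x‖ ≤ b e k * ‖x‖
  proj_zero : ∀ e ∈ E, ∀ x,
    ‖(L 0 e).starProjection x - base.starProjection x‖ ≤ b e 0 * ‖x‖
  flat_zero : ∀ e ∈ E, ‖perp base e‖ ≤ b e 0 * r₀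

namespace FlatSystem

variable {H : Type*} [NormedAddCommGroup H] [InnerProductSpace ℝ H] [FiniteDimensional ℝ H]
  {K δ M : ℝ} (D : FlatSystem H K δ M)

/-- The `k`-th scale. -/
def r (k : ℕ) : ℝ := D.r₀ / 10 ^ k

theorem r_pos (k : ℕ) : 0 < D.r k := div_pos D.r₀_pos (by positivity)

theorem r_zero : D.r 0 = D.r₀ := by simp [r]

theorem r_succ (k : ℕ) : D.r (k + 1) = D.r k / 10 := by
  rw [r, r, pow_succ, div_div]

theorem δ_le (D : FlatSystem H K δ M) : δ ≤ 1 / 10 ^ 6 := by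
  nlinarith [D.δ_mul_K_le, D.one_le_K, D.δ_nonneg]

/-- The tangential trajectory: iterated averaged projection onto the approximating planes. -/
def a : ℕ → H → H
  | 0, z => D.base.starProjection z
  | k + 1, z => a k z - ∑ c ∈ D.X k, D.θ k c (a k z) • perp (D.L k c) (a k z - c)

/-- The transport of a normal vector `w` along the trajectory of `z`. -/
def s : ℕ → H → H → H
  | 0, _, w => w
  | k + 1, z, w => s k z w - ∑ c ∈ D.X k, D.θ k c (D.a k z) • (D.L k c).starProjection (s k z w)

theorem a_zero (z : H) : D.a 0 z = D.base.starProjection z := rfl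

theorem a_succ (k : ℕ) (z : H) : D.a (k + 1) z
    = D.a k z - ∑ c ∈ D.X k, D.θ k c (D.a k z) • perp (D.L k c) (D.a k z - c) := rfl

theorem s_zero (z w : H) : D.s 0 z w = w := rfl

theorem s_succ (k : ℕ) (z w : H) : D.s (k + 1) z w = D.s k z w
    - ∑ c ∈ D.X k, D.θ k c (D.a k z) • (D.L k c).starProjection (D.s k z w) := rfl

theorem differentiable_a (k : ℕ) : Differentiable ℝ (D.a k) := by
  induction k with
  | zero => exact D.base.starProjection.differentiable
  | succ k ih =>
    have h : ∀ c ∈ D.X k, Differentiable ℝ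
        (fun z => D.θ k c (D.a k z) • perp (D.L k c) (D.a k z - c)) := fun c _ =>
      ((D.θ_diff k c).comp ih).smul
        ((perp (D.L k c)).differentiable.comp (ih.sub (differentiable_const c)))
    exact ih.sub (Differentiable.fun_sum h)

theorem fderiv_a_zero (z h : H) : fderiv ℝ (D.a 0) z h = D.base.starProjection h := by
  have : D.a 0 = D.base.starProjection := rfl
  rw [this, ContinuousLinearMap.fderiv]

theorem fderiv_a_succ (k : ℕ) (z h : H) : fderiv ℝ (D.a (k + 1)) z h
    = fderiv ℝ (D.a k) z h
      - (∑ c ∈ D.X k, D.θ k c (D.a k z) • perp (D.L k c) (fderiv ℝ (D.a k) z h)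
        + ∑ c ∈ D.X k, fderiv ℝ (D.θ k c) (D.a k z) (fderiv ℝ (D.a k) z h)
          • perp (D.L k c) (D.a k z - c)) := by
  have ha := (D.differentiable_a k z).hasFDerivAt
  have hc : ∀ c ∈ D.X k, HasFDerivAt
      (fun z => D.θ k c (D.a k z) • perp (D.L k c) (D.a k z - c)) _ z := fun c _ =>
    (((D.θ_diff k c (D.a k z)).hasFDerivAt.comp z ha)).smul
      ((perp (D.L k c)).hasFDerivAt.comp z (ha.sub_const c))
  have h1 : HasFDerivAt (D.a (k + 1)) _ z := ha.sub (HasFDerivAt.fun_sum hc)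
  rw [h1.fderiv]
  simp [Finset.sum_add_distrib]

theorem fderiv_θ_eq_zero {k : ℕ} {c z : H} (h : D.θ k c z = 0) : fderiv ℝ (D.θ k c) z = 0 :=
  IsLocalMin.fderiv_eq_zero (Filter.Eventually.of_forall fun y => by rw [h]; exact D.θ_nonneg k c y)

theorem θ_ne_zero_of_fderiv {k : ℕ} {c z v : H} (h : fderiv ℝ (D.θ k c) z v ≠ 0) :
    D.θ k c z ≠ 0 := fun h0 => h (by rw [D.fderiv_θ_eq_zero h0]; rfl)

/-- The comparison hypotheses around an active point. -/
theorem proj_close_of_θ {k : ℕ} {e y : H} (he : e ∈ D.E) (hy : ‖y - e‖ ≤ 50 * D.r k) :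
    ∀ c ∈ D.X k, D.θ k c y ≠ 0 → ∀ x,
      ‖(D.L k c).starProjection x - (D.L k e).starProjection x‖ ≤ D.b e k * ‖x‖ := by
  intro c hc h
  refine D.proj_close e he c (D.mem_of_mem_X k c hc) k ?_
  have h1 := D.θ_supp k y c hc h
  have h2 := norm_sub_le_norm_sub_add_norm_sub c y e
  rw [norm_sub_rev c y] at h2
  have := D.r_pos k
  unfold r at *
  linarith

theorem norm_perp_sub_perp_le {k : ℕ} {e y : H} (he : e ∈ D.E) (hy : ‖y - e‖ ≤ 50 * D.r k) :
    ∀ c ∈ D.X k, D.θ k c y ≠ 0 →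
      ‖perp (D.L k c) (y - c) - perp (D.L k e) (y - e)‖ ≤ 41 * D.b e k * D.r k := by
  intro c hc h
  have h1 := D.θ_supp k y c hc h
  have h2 := norm_sub_le_norm_sub_add_norm_sub c y e
  rw [norm_sub_rev c y] at h2
  have hr := D.r_pos k
  have hce : ‖c - e‖ ≤ 100 * (D.r₀ / 10 ^ k) := by unfold r at *; linarith
  have h3 := D.flat e he c (D.mem_of_mem_X k c hc) k hce
  have h4 := D.proj_close_of_θ he hy c hc h (y - c)
  rw [← norm_perp_sub_perp] at h4
  have h5 : perp (D.L k c) (y - c) - perp (D.L k e) (y - e)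
      = (perp (D.L k c) (y - c) - perp (D.L k e) (y - c)) - perp (D.L k e) (c - e) := by
    rw [sub_sub, ← map_add]; congr 2; abel
  rw [h5]
  refine (norm_sub_le _ _).trans ?_
  have hb := D.b_nonneg e he k
  have h6 := mul_le_mul_of_nonneg_left h1 hb
  unfold r at *
  linarith

theorem norm_perp_a_succ {k : ℕ} {e z : H} (he : e ∈ D.E) (hz : ‖D.a k z - e‖ ≤ 10 * D.r k) :
    ‖perp (D.L k e) (D.a (k + 1) z - e)‖ ≤ 41 * D.b e k * D.r k := by
  have hr := D.r_pos k
  have hb := D.b_nonneg e he k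
  have hz' : ‖D.a k z - e‖ ≤ 50 * D.r k := by linarith
  have hsum := D.θ_sum_eq k (D.a k z) e he hz
  have h1 : D.a (k + 1) z - e = (D.a k z - e - perp (D.L k e) (D.a k z - e))
      - ∑ c ∈ D.X k, D.θ k c (D.a k z) •
        (perp (D.L k c) (D.a k z - c) - perp (D.L k e) (D.a k z - e)) := by
    simp only [smul_sub, Finset.sum_sub_distrib, ← Finset.sum_smul, hsum, one_smul, a_succ]
    abel
  rw [h1, map_sub, map_sub, perp_perp, sub_self, zero_sub, norm_neg]
  refine (norm_perp_le _ _).trans ?_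
  exact norm_sum_smul_le_of_sum_le_one (by positivity) (fun c _ => D.θ_nonneg k c _) hsum.le
    (D.norm_perp_sub_perp_le he hz')

theorem norm_perp_sub_le_of_pos {k : ℕ} {e z : H} (he : e ∈ D.E) (hz : ‖D.a k z - e‖ ≤ 50 * D.r k)
    (hpos : ‖perp (D.L k e) (D.a k z - e)‖ ≤ 1000 * D.b e k * D.r k) :
    ∀ c ∈ D.X k, D.θ k c (D.a k z) ≠ 0 →
      ‖perp (D.L k c) (D.a k z - c)‖ ≤ 1100 * D.b e k * D.r k := by
  intro c hc h
  have h1 := D.norm_perp_sub_perp_le he hz c hc h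
  have h2 := norm_le_norm_add_norm_sub' (perp (D.L k c) (D.a k z - c))
    (perp (D.L k e) (D.a k z - e))
  nlinarith [mul_nonneg (D.b_nonneg e he k) (D.r_pos k).le]

theorem norm_a_succ_sub_of_pos {k : ℕ} {z : H}
    (hpos : ∀ e ∈ D.E, ‖D.a k z - e‖ ≤ 50 * D.r k →
      ‖perp (D.L k e) (D.a k z - e)‖ ≤ 1000 * D.b e k * D.r k) :
    ‖D.a (k + 1) z - D.a k z‖ ≤ 1100 * δ * D.r k := by
  have hr := D.r_pos k
  have hδ := D.δ_nonneg
  rw [a_succ, sub_sub_cancel_left, norm_neg]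
  refine norm_sum_smul_le_of_sum_le_one (by positivity) (fun c _ => D.θ_nonneg k c _)
    (D.θ_sum_le k _) fun c hc h => ?_
  have hcE := D.mem_of_mem_X k c hc
  have hz : ‖D.a k z - c‖ ≤ 50 * D.r k := by
    have := D.θ_supp k _ c hc h
    unfold r at *
    linarith
  refine (D.norm_perp_sub_le_of_pos hcE hz (hpos c hcE hz) c hc h).trans ?_
  exact mul_le_mul_of_nonneg_right
    (mul_le_mul_of_nonneg_left (D.b_le c hcE k) (by norm_num)) hr.le

theorem active_of_active_succ_of_pos {k : ℕ} {e z : H}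
    (hstep : ‖D.a (k + 1) z - D.a k z‖ ≤ 1100 * δ * D.r k)
    (hz : ‖D.a (k + 1) z - e‖ ≤ 50 * D.r (k + 1)) : ‖D.a k z - e‖ ≤ 10 * D.r k := by
  have hr := D.r_pos k
  have h2 := norm_sub_le_norm_sub_add_norm_sub (D.a k z) (D.a (k + 1) z) e
  rw [norm_sub_rev] at hstep
  rw [r_succ] at hz
  nlinarith [D.δ_le]

/-- Along active trajectories the tangential position is close to the approximating planes. -/
theorem norm_perp_a_sub_le (k : ℕ) (z : H) : ∀ e ∈ D.E, ‖D.a k z - e‖ ≤ 50 * D.r k →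
    ‖perp (D.L k e) (D.a k z - e)‖ ≤ 1000 * D.b e k * D.r k := by
  induction k with
  | zero =>
    intro e he hz
    have hb := D.b_nonneg e he 0
    have hr := D.r_pos 0
    have h1 := D.proj_zero e he (D.a 0 z - e)
    rw [← norm_perp_sub_perp] at h1
    have h2 := norm_le_norm_add_norm_sub' (perp (D.L 0 e) (D.a 0 z - e))
      (perp D.base (D.a 0 z - e))
    have h3 : perp D.base (D.a 0 z - e) = - perp D.base e := by
      rw [map_sub, a_zero, perp_starProjection, zero_sub]
    rw [h3, norm_neg] at h2
    have h4 := D.flat_zero e he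
    have h5 := mul_le_mul_of_nonneg_left hz hb
    rw [h3] at h1
    rw [← D.r_zero] at h4
    nlinarith [mul_nonneg hb hr.le]
  | succ k ih =>
    intro e he hz
    have hb := D.b_nonneg e he k
    have hr := D.r_pos k
    have h10 := D.active_of_active_succ_of_pos (D.norm_a_succ_sub_of_pos ih) hz
    have h1 := D.norm_perp_a_succ he h10
    have h2 := D.proj_succ e he k (D.a (k + 1) z - e)
    rw [← norm_perp_sub_perp] at h2
    have h3 := norm_le_norm_add_norm_sub' (perp (D.L (k + 1) e) (D.a (k + 1) z - e))
      (perp (D.L k e) (D.a (k + 1) z - e))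
    have h4 := mul_le_mul_of_nonneg_left hz hb
    have h5 := D.b_le_two_mul e he k
    rw [r_succ] at *
    nlinarith [mul_nonneg hb hr.le, mul_le_mul_of_nonneg_right h5 hr.le]

theorem norm_a_succ_sub (k : ℕ) (z : H) : ‖D.a (k + 1) z - D.a k z‖ ≤ 1100 * δ * D.r k :=
  D.norm_a_succ_sub_of_pos (D.norm_perp_a_sub_le k z)

theorem active_of_active_succ {k : ℕ} {e z : H}
    (hz : ‖D.a (k + 1) z - e‖ ≤ 50 * D.r (k + 1)) : ‖D.a k z - e‖ ≤ 10 * D.r k :=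
  D.active_of_active_succ_of_pos (D.norm_a_succ_sub k z) hz

/-- If no point of `E` is close to the trajectory, every weight vanishes. -/
theorem θ_eq_zero_of_inactive {k : ℕ} {y : H} (h : ∀ e ∈ D.E, 50 * D.r k < ‖y - e‖) :
    ∀ c ∈ D.X k, D.θ k c y = 0 := by
  intro c hc
  by_contra h0
  have h1 := D.θ_supp k y c hc h0
  have h2 := h c (D.mem_of_mem_X k c hc)
  have := D.r_pos k
  unfold r at *
  linarith

end FlatSystem

theorem norm_comparable_of_norm_sub_le {F : Type*} [NormedAddCommGroup F] {x y : F}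
    {ε : ℝ} (hε : ε ≤ 1 / 10)
    (h : ‖x - y‖ ≤ ε * ‖y‖) : ‖x‖ ≤ 11 / 10 * ‖y‖ ∧ ‖y‖ ≤ 10 / 9 * ‖x‖ := by
  have h1 := norm_le_norm_add_norm_sub' x y
  have h2 := norm_le_norm_add_norm_sub x y
  have h3 : ε * ‖y‖ ≤ 1 / 10 * ‖y‖ := mul_le_mul_of_nonneg_right hε (norm_nonneg _)
  constructor <;> linarith

namespace FlatSystem

variable {H : Type*} [NormedAddCommGroup H] [InnerProductSpace ℝ H] [FiniteDimensional ℝ H]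
  {K δ M : ℝ} (D : FlatSystem H K δ M)

/-- The velocity of the tangential trajectory in the direction `h`. -/
def v (k : ℕ) (z h : H) : H := fderiv ℝ (D.a k) z h

theorem v_zero (z h : H) : D.v 0 z h = D.base.starProjection h := D.fderiv_a_zero z h

theorem v_succ (k : ℕ) (z h : H) : D.v (k + 1) z h = D.v k z h
    - (∑ c ∈ D.X k, D.θ k c (D.a k z) • perp (D.L k c) (D.v k z h)
      + ∑ c ∈ D.X k, fderiv ℝ (D.θ k c) (D.a k z) (D.v k z h)
        • perp (D.L k c) (D.a k z - c)) := D.fderiv_a_succ k z h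

theorem sum_abs_fderiv_θ_le (k : ℕ) (z x : H) :
    ∑ c ∈ D.X k, |fderiv ℝ (D.θ k c) z x| ≤ K / D.r k * ‖x‖ := D.θ_deriv k z x

theorem norm_perp_le_of_fderiv {k : ℕ} {e z x : H} (he : e ∈ D.E)
    (hz : ‖D.a k z - e‖ ≤ 50 * D.r k) :
    ∀ c ∈ D.X k, fderiv ℝ (D.θ k c) (D.a k z) x ≠ 0 →
      ‖perp (D.L k c) (D.a k z - c)‖ ≤ 1100 * D.b e k * D.r k := fun c hc h =>
  D.norm_perp_sub_le_of_pos he hz (D.norm_perp_a_sub_le k z e he hz) c hc (D.θ_ne_zero_of_fderiv h)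

theorem K_pos (D : FlatSystem H K δ M) : 0 < K := zero_lt_one.trans_le D.one_le_K

theorem K_mul_b_le {e : H} (he : e ∈ D.E) (k : ℕ) : K * D.b e k ≤ 1 / 10 ^ 6 := by
  nlinarith [D.b_le e he k, D.K_pos, D.δ_mul_K_le]

theorem K_div_r_mul (k : ℕ) (x : ℝ) : K / D.r k * (x * D.r k) = K * x := by
  have := (D.r_pos k).ne'
  field_simp

theorem norm_v_succ_sub_of_tan {k : ℕ} {e z h : H} (he : e ∈ D.E)
    (hz : ‖D.a k z - e‖ ≤ 50 * D.r k)
    (ht : ‖perp (D.L k e) (D.v k z h)‖ ≤ 5000 * K * D.b e k * ‖D.v k z h‖) :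
    ‖D.v (k + 1) z h - D.v k z h‖ ≤ 6200 * (K * D.b e k) * ‖D.v k z h‖ := by
  have hb := D.b_nonneg e he k
  have hr := D.r_pos k
  have hK := D.K_pos
  rw [v_succ, sub_sub_cancel_left, norm_neg]
  refine (tangent_step_norm_sub hb (fun c _ => D.θ_nonneg k c _) (D.θ_sum_le k _)
    (D.proj_close_of_θ he hz) (by positivity) ht (by positivity)
    (D.sum_abs_fderiv_θ_le k _ _) (D.norm_perp_le_of_fderiv he hz)).trans ?_
  rw [D.K_div_r_mul]
  refine mul_le_mul_of_nonneg_right ?_ (norm_nonneg _)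
  nlinarith [D.one_le_K]

theorem norm_sq_v_succ_of_tan {k : ℕ} {e z h : H} (he : e ∈ D.E)
    (hz : ‖D.a k z - e‖ ≤ 50 * D.r k)
    (ht : ‖perp (D.L k e) (D.v k z h)‖ ≤ 5000 * K * D.b e k * ‖D.v k z h‖) :
    |‖D.v (k + 1) z h‖ ^ 2 - ‖D.v k z h‖ ^ 2|
      ≤ 2 * 10 ^ 8 * (K * D.b e k) ^ 2 * ‖D.v k z h‖ ^ 2 := by
  have hb := D.b_nonneg e he k
  have hr := D.r_pos k
  have hK := D.K_pos
  rw [v_succ]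
  refine (tangent_step_norm_sq hb (fun c _ => D.θ_nonneg k c _) (D.θ_sum_le k _)
    (D.proj_close_of_θ he hz) (by positivity) ht (by positivity) (by positivity)
    (D.sum_abs_fderiv_θ_le k _ _) (D.norm_perp_le_of_fderiv he hz)
    (fun c _ h => D.θ_ne_zero_of_fderiv h) (fun c _ => perp_perp _ _)).trans ?_
  rw [D.K_div_r_mul]
  refine mul_le_mul_of_nonneg_right ?_ (by positivity)
  have h1 : (5000 * K + 1) * D.b e k + K * (1100 * D.b e k) ≤ 6200 * (K * D.b e k) := by
    nlinarith [D.one_le_K]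
  have h2 := pow_le_pow_left₀ (by positivity) h1 2
  nlinarith [sq_nonneg (K * D.b e k)]

/-- Velocities along active trajectories are nearly tangent to the approximating planes. -/
theorem norm_perp_v_le (k : ℕ) (z h : H) : ∀ e ∈ D.E, ‖D.a k z - e‖ ≤ 50 * D.r k →
    ‖perp (D.L k e) (D.v k z h)‖ ≤ 5000 * K * D.b e k * ‖D.v k z h‖ := by
  induction k with
  | zero =>
    intro e he _
    have h1 := D.proj_zero e he (D.v 0 z h)
    rw [← norm_perp_sub_perp, v_zero, perp_starProjection, sub_zero] at h1
    rw [v_zero]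
    refine h1.trans (mul_le_mul_of_nonneg_right ?_ (norm_nonneg _))
    nlinarith [D.b_nonneg e he 0, D.one_le_K]
  | succ k ih =>
    intro e he hz
    have hb := D.b_nonneg e he k
    have hr := D.r_pos k
    have hK := D.K_pos
    have h10 := D.active_of_active_succ hz
    have h50 : ‖D.a k z - e‖ ≤ 50 * D.r k := by linarith
    have h1 := tangent_step_reset hb (fun c _ => D.θ_nonneg k c _)
      (D.θ_sum_eq k (D.a k z) e he h10) (D.proj_close_of_θ he h50) (by positivity)
      (D.sum_abs_fderiv_θ_le k _ _) (D.norm_perp_le_of_fderiv (x := D.v k z h) he h50)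
    rw [← v_succ, D.K_div_r_mul] at h1
    have h2 := D.norm_v_succ_sub_of_tan he h50 (ih e he h50)
    have h3 := (norm_comparable_of_norm_sub_le (by linarith [D.K_mul_b_le he k]) h2).2
    have h4 := D.proj_succ e he k (D.v (k + 1) z h)
    rw [← norm_perp_sub_perp] at h4
    have h5 := norm_le_norm_add_norm_sub' (perp (D.L (k + 1) e) (D.v (k + 1) z h))
      (perp (D.L k e) (D.v (k + 1) z h))
    have h6 : D.b e k + K * (1100 * D.b e k) ≤ 1101 * (K * D.b e k) := by
      nlinarith [D.one_le_K]
    have h7 := mul_le_mul_of_nonneg_right h6 (norm_nonneg (D.v k z h))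
    have h8 : D.b e k * ‖D.v (k + 1) z h‖ ≤ K * D.b e k * ‖D.v (k + 1) z h‖ :=
      mul_le_mul_of_nonneg_right (by nlinarith [D.one_le_K]) (norm_nonneg _)
    have h9 := mul_le_mul_of_nonneg_left h3 (mul_nonneg hK.le hb)
    have h11 : K * D.b e k * ‖D.v (k + 1) z h‖ ≤ K * (2 * D.b e (k + 1)) * ‖D.v (k + 1) z h‖ :=
      mul_le_mul_of_nonneg_right (mul_le_mul_of_nonneg_left (D.b_le_two_mul e he k) hK.le)
        (norm_nonneg _)
    have h12 : 0 ≤ K * D.b e k * ‖D.v (k + 1) z h‖ := by positivity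
    linarith

theorem norm_v_succ_sub {k : ℕ} {e z h : H} (he : e ∈ D.E) (hz : ‖D.a k z - e‖ ≤ 50 * D.r k) :
    ‖D.v (k + 1) z h - D.v k z h‖ ≤ 6200 * (K * D.b e k) * ‖D.v k z h‖ :=
  D.norm_v_succ_sub_of_tan he hz (D.norm_perp_v_le k z h e he hz)

theorem norm_sq_v_succ {k : ℕ} {e z h : H} (he : e ∈ D.E) (hz : ‖D.a k z - e‖ ≤ 50 * D.r k) :
    |‖D.v (k + 1) z h‖ ^ 2 - ‖D.v k z h‖ ^ 2|
      ≤ 2 * 10 ^ 8 * (K * D.b e k) ^ 2 * ‖D.v k z h‖ ^ 2 :=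
  D.norm_sq_v_succ_of_tan he hz (D.norm_perp_v_le k z h e he hz)

theorem norm_sum_starProjection_s_of_normal {k : ℕ} {e z w : H} (he : e ∈ D.E)
    (hz : ‖D.a k z - e‖ ≤ 50 * D.r k)
    (hw : ‖(D.L k e).starProjection (D.s k z w)‖ ≤ 6 * D.b e k * ‖D.s k z w‖) :
    ‖D.s (k + 1) z w - D.s k z w‖ ≤ 7 * D.b e k * ‖D.s k z w‖ := by
  rw [s_succ, sub_sub_cancel_left, norm_neg]
  refine (normal_step_norm_sub (D.b_nonneg e he k) (fun c _ => D.θ_nonneg k c _) (D.θ_sum_le k _)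
    (D.proj_close_of_θ he hz) (by norm_num) hw).trans_eq ?_
  norm_num

/-- Transported normal vectors are nearly orthogonal to the approximating planes. -/
theorem norm_starProjection_s_le (k : ℕ) (z : H) {w : H} (hw : D.base.starProjection w = 0) :
    ∀ e ∈ D.E, ‖D.a k z - e‖ ≤ 50 * D.r k →
    ‖(D.L k e).starProjection (D.s k z w)‖ ≤ 6 * D.b e k * ‖D.s k z w‖ := by
  induction k with
  | zero =>
    intro e he _
    have h1 := D.proj_zero e he w
    rw [hw, sub_zero] at h1
    rw [s_zero]
    nlinarith [mul_nonneg (D.b_nonneg e he 0) (norm_nonneg w)]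
  | succ k ih =>
    intro e he hz
    have hb := D.b_nonneg e he k
    have hr := D.r_pos k
    have h10 := D.active_of_active_succ hz
    have h50 : ‖D.a k z - e‖ ≤ 50 * D.r k := by linarith
    have h1 := normal_step_reset hb (fun c _ => D.θ_nonneg k c _)
      (D.θ_sum_eq k (D.a k z) e he h10) (D.proj_close_of_θ he h50) (D.s k z w)
    rw [← s_succ] at h1
    have h2 := D.norm_sum_starProjection_s_of_normal he h50 (ih e he h50)
    have h3 := (norm_comparable_of_norm_sub_le
      (by linarith [D.b_le e he k, D.δ_le]) h2).2
    have h4 := D.proj_succ e he k (D.s (k + 1) z w)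
    have h5 := norm_le_norm_add_norm_sub' ((D.L (k + 1) e).starProjection (D.s (k + 1) z w))
      ((D.L k e).starProjection (D.s (k + 1) z w))
    have h6 := mul_le_mul_of_nonneg_left h3 hb
    have h7 := mul_le_mul_of_nonneg_right (D.b_le_two_mul e he k) (norm_nonneg (D.s (k + 1) z w))
    have h8 := mul_nonneg hb (norm_nonneg (D.s (k + 1) z w))
    linarith

theorem norm_s_succ_sub {k : ℕ} {e z w : H} (hw : D.base.starProjection w = 0) (he : e ∈ D.E)
    (hz : ‖D.a k z - e‖ ≤ 50 * D.r k) :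
    ‖D.s (k + 1) z w - D.s k z w‖ ≤ 7 * D.b e k * ‖D.s k z w‖ :=
  D.norm_sum_starProjection_s_of_normal he hz (D.norm_starProjection_s_le k z hw e he hz)

theorem norm_sq_s_succ {k : ℕ} {e z w : H} (hw : D.base.starProjection w = 0) (he : e ∈ D.E)
    (hz : ‖D.a k z - e‖ ≤ 50 * D.r k) :
    |‖D.s (k + 1) z w‖ ^ 2 - ‖D.s k z w‖ ^ 2|
      ≤ 2 * 10 ^ 8 * (K * D.b e k) ^ 2 * ‖D.s k z w‖ ^ 2 := by
  have hb := D.b_nonneg e he k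
  rw [s_succ]
  refine (normal_step_norm_sq hb (fun c _ => D.θ_nonneg k c _) (D.θ_sum_le k _)
    (D.proj_close_of_θ he hz) (by norm_num)
    (D.norm_starProjection_s_le k z hw e he hz)).trans ?_
  refine mul_le_mul_of_nonneg_right ?_ (by positivity)
  have h1 : D.b e k ≤ K * D.b e k := by nlinarith [D.one_le_K]
  have h2 := pow_le_pow_left₀ hb h1 2
  nlinarith [sq_nonneg (K * D.b e k)]

theorem v_succ_of_inactive {k : ℕ} {z : H} (h : ∀ e ∈ D.E, 50 * D.r k < ‖D.a k z - e‖) (x : H) :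
    D.v (k + 1) z x = D.v k z x := by
  have h0 := D.θ_eq_zero_of_inactive h
  rw [v_succ, Finset.sum_eq_zero fun c hc => by rw [h0 c hc, zero_smul],
    Finset.sum_eq_zero fun c hc => by rw [D.fderiv_θ_eq_zero (h0 c hc)]; simp]
  simp

theorem s_succ_of_inactive {k : ℕ} {z : H} (h : ∀ e ∈ D.E, 50 * D.r k < ‖D.a k z - e‖) (x : H) :
    D.s (k + 1) z x = D.s k z x := by
  have h0 := D.θ_eq_zero_of_inactive h
  rw [s_succ, Finset.sum_eq_zero fun c hc => by rw [h0 c hc, zero_smul], sub_zero]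

theorem active_or_inactive (k : ℕ) (z : H) :
    (∃ e ∈ D.E, ‖D.a k z - e‖ ≤ 50 * D.r k) ∨ ∀ e ∈ D.E, 50 * D.r k < ‖D.a k z - e‖ := by
  by_cases h : ∃ e ∈ D.E, ‖D.a k z - e‖ ≤ 50 * D.r k
  · exact Or.inl h
  · push Not at h
    exact Or.inr h

theorem norm_v_succ_sub_le (k : ℕ) (z h : H) :
    ‖D.v (k + 1) z h - D.v k z h‖ ≤ 6200 * (K * δ) * ‖D.v k z h‖ := by
  rcases D.active_or_inactive k z with ⟨e, he, hz⟩ | hz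
  · refine (D.norm_v_succ_sub he hz).trans (mul_le_mul_of_nonneg_right ?_ (norm_nonneg _))
    nlinarith [mul_le_mul_of_nonneg_left (D.b_le e he k) D.K_pos.le]
  · rw [D.v_succ_of_inactive hz, sub_self, norm_zero]
    have := D.δ_nonneg
    have := D.K_pos
    positivity

theorem norm_s_succ_sub_le (k : ℕ) (z : H) {w : H} (hw : D.base.starProjection w = 0) :
    ‖D.s (k + 1) z w - D.s k z w‖ ≤ 7 * δ * ‖D.s k z w‖ := by
  rcases D.active_or_inactive k z with ⟨e, he, hz⟩ | hz
  · refine (D.norm_s_succ_sub hw he hz).trans (mul_le_mul_of_nonneg_right ?_ (norm_nonneg _))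
    nlinarith [D.b_le e he k]
  · rw [D.s_succ_of_inactive hz, sub_self, norm_zero]
    have := D.δ_nonneg
    positivity

theorem norm_v_succ_comparable (k : ℕ) (z h : H) :
    ‖D.v (k + 1) z h‖ ≤ 11 / 10 * ‖D.v k z h‖ ∧ ‖D.v k z h‖ ≤ 10 / 9 * ‖D.v (k + 1) z h‖ :=
  norm_comparable_of_norm_sub_le (by nlinarith [D.δ_mul_K_le]) (D.norm_v_succ_sub_le k z h)

theorem norm_s_succ_comparable (k : ℕ) (z : H) {w : H} (hw : D.base.starProjection w = 0) :
    ‖D.s (k + 1) z w‖ ≤ 11 / 10 * ‖D.s k z w‖ ∧ ‖D.s k z w‖ ≤ 10 / 9 * ‖D.s (k + 1) z w‖ :=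
  norm_comparable_of_norm_sub_le (by linarith [D.δ_le]) (D.norm_s_succ_sub_le k z hw)

/-- Velocities and transported normal vectors are nearly orthogonal. -/
theorem abs_inner_v_s_le_of_active {k : ℕ} {e z h w : H} (hw : D.base.starProjection w = 0)
    (he : e ∈ D.E) (hz : ‖D.a k z - e‖ ≤ 50 * D.r k) :
    |inner ℝ (D.v k z h) (D.s k z w)| ≤ 1 / 100 * (‖D.v k z h‖ * ‖D.s k z w‖) := by
  have h1 := D.norm_perp_v_le k z h e he hz
  have h2 := D.norm_starProjection_s_le k z hw e he hz
  have h3 : inner ℝ (D.v k z h) (D.s k z w)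
      = inner ℝ (perp (D.L k e) (D.v k z h)) (D.s k z w)
        + inner ℝ (D.v k z h) ((D.L k e).starProjection (D.s k z w)) := by
    rw [perp_apply, inner_sub_left, (D.L k e).inner_starProjection_left_eq_right, sub_add_cancel]
  rw [h3]
  refine (abs_add_le _ _).trans ?_
  have h4 := (abs_real_inner_le_norm (perp (D.L k e) (D.v k z h)) (D.s k z w)).trans
    (mul_le_mul_of_nonneg_right h1 (norm_nonneg _))
  have h5 := (abs_real_inner_le_norm (D.v k z h) ((D.L k e).starProjection (D.s k z w))).trans
    (mul_le_mul_of_nonneg_left h2 (norm_nonneg _))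
  have h6 := D.K_mul_b_le he k
  have h7 : D.b e k ≤ 1 / 10 ^ 6 := (D.b_le e he k).trans D.δ_le
  have h8 : 0 ≤ ‖D.v k z h‖ * ‖D.s k z w‖ := by positivity
  nlinarith [mul_le_mul_of_nonneg_right h6 h8, mul_le_mul_of_nonneg_right h7 h8]

end FlatSystem

/-- Multiplicative drift of a sequence with summable relative increments. -/
theorem le_exp_sum_mul_of_abs_sub_le {y q : ℕ → ℝ} {N : ℕ} (hy : ∀ i, 0 ≤ y i)
    (hq : ∀ i < N, 0 ≤ q i ∧ q i ≤ 1 / 2) (h : ∀ i < N, |y (i + 1) - y i| ≤ q i * y i) :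
    y N ≤ Real.exp (2 * ∑ i ∈ Finset.range N, q i) * y 0 ∧
      y 0 ≤ Real.exp (2 * ∑ i ∈ Finset.range N, q i) * y N := by
  induction N with
  | zero => simp
  | succ N ih =>
    obtain ⟨h1, h2⟩ := ih (fun i hi => hq i (hi.trans N.lt_succ_self))
      (fun i hi => h i (hi.trans N.lt_succ_self))
    obtain ⟨hq0, hq1⟩ := hq N N.lt_succ_self
    have h3 := abs_le.1 (h N N.lt_succ_self)
    have h4 := Real.add_one_le_exp (2 * q N)
    have hyN := hy N
    have hyN' := hy (N + 1)
    rw [Finset.sum_range_succ, mul_add, Real.exp_add]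
    constructor
    · have h5 : y (N + 1) ≤ Real.exp (2 * q N) * y N := by nlinarith
      calc y (N + 1) ≤ Real.exp (2 * q N) * y N := h5
        _ ≤ Real.exp (2 * q N) * (Real.exp (2 * ∑ i ∈ Finset.range N, q i) * y 0) := by gcongr
        _ = _ := by ring
    · have h5 : y N ≤ Real.exp (2 * q N) * y (N + 1) := by
        have h6 : (1 - q N) * y N ≤ y (N + 1) := by linarith
        have h7 : 1 ≤ (1 + 2 * q N) * (1 - q N) := by nlinarith
        have h8 : y N ≤ (1 + 2 * q N) * (1 - q N) * y N := le_mul_of_one_le_left hyN h7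
        have h9 := mul_le_mul_of_nonneg_left h6 (by linarith : 0 ≤ 1 + 2 * q N)
        have h10 := mul_le_mul_of_nonneg_right h4 hyN'
        linarith
      calc y 0 ≤ Real.exp (2 * ∑ i ∈ Finset.range N, q i) * y N := h2
        _ ≤ Real.exp (2 * ∑ i ∈ Finset.range N, q i) * (Real.exp (2 * q N) * y (N + 1)) := by
          gcongr
        _ = _ := by ring

namespace FlatSystem

variable {H : Type*} [NormedAddCommGroup H] [InnerProductSpace ℝ H] [FiniteDimensional ℝ H]
  {K δ M : ℝ} (D : FlatSystem H K δ M)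

/-- The last active step determines the current velocity and normal transport. -/
theorem eq_initial_or_eq_after_active (k : ℕ) (z : H) :
    ((∀ x, D.v k z x = D.v 0 z x) ∧ ∀ w, D.s k z w = w) ∨
      ∃ j, ∃ e ∈ D.E, ‖D.a j z - e‖ ≤ 50 * D.r j ∧
        (∀ x, D.v k z x = D.v (j + 1) z x) ∧ ∀ w, D.s k z w = D.s (j + 1) z w := by
  induction k with
  | zero => exact Or.inl ⟨fun _ => rfl, fun _ => rfl⟩
  | succ k ih =>
    rcases D.active_or_inactive k z with ⟨e, he, hz⟩ | hz
    · exact Or.inr ⟨k, e, he, hz, fun _ => rfl, fun _ => rfl⟩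
    · simp only [D.v_succ_of_inactive hz, D.s_succ_of_inactive hz]
      exact ih

theorem active_of_active_le {e z : H} {j : ℕ} (hz : ‖D.a j z - e‖ ≤ 50 * D.r j) :
    ∀ i ≤ j, ‖D.a i z - e‖ ≤ 50 * D.r i := by
  induction j with
  | zero => intro i hi; rwa [Nat.le_zero.1 hi]
  | succ j ih =>
    intro i hi
    rcases Nat.le_succ_iff.1 hi with h | rfl
    · exact ih (by linarith [D.active_of_active_succ hz, D.r_pos j]) i h
    · exact hz

/-- The distortion constant of the velocities and normal transports. -/
def distortion (_ : FlatSystem H K δ M) : ℝ := Real.exp (2 * 10 ^ 8 * K ^ 2 * |M|)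

theorem one_le_distortion : 1 ≤ D.distortion := Real.one_le_exp (by positivity)

theorem norm_le_distortion_mul_of_active {f : ℕ → H} {e z : H} {j : ℕ} (he : e ∈ D.E)
    (hz : ‖D.a j z - e‖ ≤ 50 * D.r j)
    (hf : ∀ i, ‖D.a i z - e‖ ≤ 50 * D.r i →
      |‖f (i + 1)‖ ^ 2 - ‖f i‖ ^ 2| ≤ 2 * 10 ^ 8 * (K * D.b e i) ^ 2 * ‖f i‖ ^ 2) :
    ‖f (j + 1)‖ ≤ D.distortion * ‖f 0‖ ∧ ‖f 0‖ ≤ D.distortion * ‖f (j + 1)‖ := by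
  have h1 := le_exp_sum_mul_of_abs_sub_le (y := fun i => ‖f i‖ ^ 2)
    (q := fun i => 2 * 10 ^ 8 * (K * D.b e i) ^ 2) (N := j + 1) (fun i => by positivity)
    (fun i _ => ⟨by positivity, by
      have := D.K_mul_b_le he i
      have h0 := mul_nonneg D.K_pos.le (D.b_nonneg e he i)
      have := pow_le_pow_left₀ h0 this 2
      norm_num at this ⊢
      linarith⟩)
    (fun i hi => hf i (D.active_of_active_le hz i (Nat.lt_succ_iff.1 hi)))
  have h2 : Real.exp (2 * ∑ i ∈ Finset.range (j + 1), 2 * 10 ^ 8 * (K * D.b e i) ^ 2)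
      ≤ D.distortion ^ 2 := by
    rw [distortion, ← Real.exp_nat_mul]
    refine Real.exp_le_exp.2 ?_
    push_cast
    refine mul_le_mul_of_nonneg_left ?_ (by norm_num)
    simp only [mul_pow, ← Finset.mul_sum, ← mul_assoc]
    exact mul_le_mul_of_nonneg_left ((D.b_sq_sum_le e he (j + 1)).trans (le_abs_self M))
      (by positivity)
  have hp : 0 ≤ D.distortion := zero_le_one.trans D.one_le_distortion
  constructor <;> refine le_of_sq_le_sq ?_ (by positivity) <;> rw [mul_pow]
  · exact h1.1.trans (mul_le_mul_of_nonneg_right h2 (by positivity))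
  · exact h1.2.trans (mul_le_mul_of_nonneg_right h2 (by positivity))

theorem norm_v_comparable_initial (k : ℕ) (z h : H) :
    ‖D.v k z h‖ ≤ D.distortion * ‖D.base.starProjection h‖ ∧
      ‖D.base.starProjection h‖ ≤ D.distortion * ‖D.v k z h‖ := by
  rw [← D.v_zero z h]
  rcases D.eq_initial_or_eq_after_active k z with ⟨h1, -⟩ | ⟨j, e, he, hz, h1, -⟩
  · rw [h1]
    have := le_mul_of_one_le_left (norm_nonneg (D.v 0 z h)) D.one_le_distortion
    exact ⟨this, this⟩
  · rw [h1]
    exact D.norm_le_distortion_mul_of_active (f := fun i => D.v i z h) he hz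
      fun i hi => D.norm_sq_v_succ he hi

theorem norm_s_comparable_initial (k : ℕ) (z : H) {w : H} (hw : D.base.starProjection w = 0) :
    ‖D.s k z w‖ ≤ D.distortion * ‖w‖ ∧ ‖w‖ ≤ D.distortion * ‖D.s k z w‖ := by
  rcases D.eq_initial_or_eq_after_active k z with ⟨-, h1⟩ | ⟨j, e, he, hz, -, h1⟩
  · rw [h1]
    have := le_mul_of_one_le_left (norm_nonneg w) D.one_le_distortion
    exact ⟨this, this⟩
  · rw [h1]
    exact D.norm_le_distortion_mul_of_active (f := fun i => D.s i z w) he hz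
      fun i hi => D.norm_sq_s_succ hw he hi

theorem abs_inner_v_s_le (k : ℕ) (z h : H) {w : H} (hw : D.base.starProjection w = 0) :
    |inner ℝ (D.v k z h) (D.s k z w)| ≤ 1 / 10 * (‖D.v k z h‖ * ‖D.s k z w‖) := by
  rcases D.eq_initial_or_eq_after_active k z with ⟨h1, h2⟩ | ⟨j, e, he, hz, h1, h2⟩
  · rw [h1, h2, v_zero, Submodule.inner_starProjection_left_eq_right, hw, inner_zero_right,
      abs_zero]
    positivity
  · rw [h1, h2]
    have h3 := D.abs_inner_v_s_le_of_active (h := h) hw he hz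
    have h4 := D.norm_v_succ_sub_le j z h
    have h5 := D.norm_s_succ_sub_le j z hw
    obtain ⟨h6, h6'⟩ := D.norm_v_succ_comparable j z h
    obtain ⟨h7, h7'⟩ := D.norm_s_succ_comparable j z hw
    have hδ := D.δ_le
    have hδ0 := D.δ_nonneg
    have hK := D.δ_mul_K_le
    generalize D.v (j + 1) z h = v' at *
    generalize D.v j z h = x at *
    generalize D.s (j + 1) z w = s' at *
    generalize D.s j z w = y at *
    have h8 : (inner ℝ v' s' : ℝ) = inner ℝ x y + (inner ℝ (v' - x) s' + inner ℝ x (s' - y)) := by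
      simp only [inner_sub_left, inner_sub_right]; ring
    have h9 := (abs_real_inner_le_norm (v' - x) s').trans
      (mul_le_mul h4 h7 (norm_nonneg _) (by
        have := D.K_pos
        positivity))
    have h10 := (abs_real_inner_le_norm x (s' - y)).trans
      (mul_le_mul_of_nonneg_left h5 (norm_nonneg _))
    have h11 : |inner ℝ v' s'| ≤ |inner ℝ x y| + (|inner ℝ (v' - x) s'| + |inner ℝ x (s' - y)|) := by
      rw [h8]
      exact (abs_add_le _ _).trans (by gcongr; exact abs_add_le _ _)
    have h12 : ‖x‖ * ‖y‖ ≤ (10 / 9 * ‖v'‖) * (10 / 9 * ‖s'‖) :=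
      mul_le_mul h6' h7' (norm_nonneg _) (by positivity)
    have h13 : 0 ≤ ‖x‖ * ‖y‖ := by positivity
    have h14 := mul_le_mul_of_nonneg_right hK h13
    have h15 := mul_le_mul_of_nonneg_right hδ h13
    have h16 : 0 ≤ ‖v'‖ * ‖s'‖ := by positivity
    nlinarith

/-- The normal component of the parametrization. -/
def u (k : ℕ) (z : H) : H := D.s k z (perp D.base z)

theorem starProjection_base_perp (z : H) : D.base.starProjection (perp D.base z) = 0 :=
  starProjection_perp _ _

theorem u_zero (z : H) : D.u 0 z = perp D.base z := rfl

theorem u_succ (k : ℕ) (z : H) : D.u (k + 1) z = D.u k z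
    - ∑ c ∈ D.X k, D.θ k c (D.a k z) • (D.L k c).starProjection (D.u k z) := rfl

theorem differentiable_u (k : ℕ) : Differentiable ℝ (D.u k) := by
  induction k with
  | zero => exact (perp D.base).differentiable
  | succ k ih =>
    have h : ∀ c ∈ D.X k, Differentiable ℝ
        (fun z => D.θ k c (D.a k z) • (D.L k c).starProjection (D.u k z)) := fun c _ =>
      ((D.θ_diff k c).comp (D.differentiable_a k)).smul
        ((D.L k c).starProjection.differentiable.comp ih)
    exact ih.sub (Differentiable.fun_sum h)

theorem fderiv_u_succ (k : ℕ) (z h : H) : fderiv ℝ (D.u (k + 1)) z h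
    = fderiv ℝ (D.u k) z h
      - (∑ c ∈ D.X k, D.θ k c (D.a k z) • (D.L k c).starProjection (fderiv ℝ (D.u k) z h)
        + ∑ c ∈ D.X k, fderiv ℝ (D.θ k c) (D.a k z) (D.v k z h)
          • (D.L k c).starProjection (D.u k z)) := by
  have ha := (D.differentiable_a k z).hasFDerivAt
  have hu := (D.differentiable_u k z).hasFDerivAt
  have hc : ∀ c ∈ D.X k, HasFDerivAt
      (fun z => D.θ k c (D.a k z) • (D.L k c).starProjection (D.u k z)) _ z := fun c _ =>
    (((D.θ_diff k c (D.a k z)).hasFDerivAt.comp z ha)).smul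
      ((D.L k c).starProjection.hasFDerivAt.comp z hu)
  have h1 : HasFDerivAt (D.u (k + 1)) _ z := hu.sub (HasFDerivAt.fun_sum hc)
  rw [h1.fderiv]
  simp [Finset.sum_add_distrib, v]

/-- The part of the derivative of `u` due to the variation of the normal transport. -/
def t (k : ℕ) (z h : H) : H := fderiv ℝ (D.u k) z h - D.s k z (perp D.base h)

theorem t_zero (z h : H) : D.t 0 z h = 0 := by
  have : D.u 0 = perp D.base := rfl
  rw [t, this, ContinuousLinearMap.fderiv, s_zero, sub_self]

theorem t_succ (k : ℕ) (z h : H) : D.t (k + 1) z h = D.t k z h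
    - ∑ c ∈ D.X k, D.θ k c (D.a k z) • (D.L k c).starProjection (D.t k z h)
    - ∑ c ∈ D.X k, fderiv ℝ (D.θ k c) (D.a k z) (D.v k z h)
        • (D.L k c).starProjection (D.u k z) := by
  simp only [t, fderiv_u_succ, s_succ, map_sub, smul_sub, Finset.sum_sub_distrib]
  abel

theorem norm_u_succ_comparable (k : ℕ) (z : H) :
    ‖D.u (k + 1) z‖ ≤ 11 / 10 * ‖D.u k z‖ ∧ ‖D.u k z‖ ≤ 10 / 9 * ‖D.u (k + 1) z‖ :=
  D.norm_s_succ_comparable k z (D.starProjection_base_perp z)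

theorem norm_starProjection_u_le {k : ℕ} {z c : H} (hc : c ∈ D.X k)
    (h : D.θ k c (D.a k z) ≠ 0) : ‖(D.L k c).starProjection (D.u k z)‖ ≤ 6 * δ * ‖D.u k z‖ := by
  have hr := D.r_pos k
  have h1 := D.θ_supp k _ c hc h
  have h2 : ‖D.a k z - c‖ ≤ 50 * D.r k := by unfold r at *; linarith
  have h3 := D.mem_of_mem_X k c hc
  refine (D.norm_starProjection_s_le k z (D.starProjection_base_perp z) c h3 h2).trans ?_
  exact mul_le_mul_of_nonneg_right (by linarith [D.b_le c h3 k]) (norm_nonneg _)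

theorem norm_sum_fderiv_smul_starProjection_u_le (k : ℕ) (z h : H) :
    ‖∑ c ∈ D.X k, fderiv ℝ (D.θ k c) (D.a k z) (D.v k z h)
        • (D.L k c).starProjection (D.u k z)‖
      ≤ K / D.r k * ‖D.v k z h‖ * (6 * δ * ‖D.u k z‖) := by
  have hδ := D.δ_nonneg
  refine (norm_sum_smul_le_sum_abs_mul (B := 6 * δ * ‖D.u k z‖) fun c hc h0 =>
    D.norm_starProjection_u_le hc (D.θ_ne_zero_of_fderiv h0)).trans ?_
  exact mul_le_mul_of_nonneg_right (D.sum_abs_fderiv_θ_le k _ _) (by positivity)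

theorem norm_t_mul_r_le (k : ℕ) (z h : H) :
    ‖D.t k z h‖ * D.r k ≤ 5 * (K * δ) * (‖D.v k z h‖ * ‖D.u k z‖) := by
  have hδ := D.δ_nonneg
  have hK := D.K_pos
  induction k with
  | zero => rw [t_zero, norm_zero, zero_mul]; positivity
  | succ k ih =>
    have hr := D.r_pos k
    have h1 := D.norm_sum_fderiv_smul_starProjection_u_le k z h
    have h2 := norm_sub_sum_starProjection_le (L := D.L k) (fun c _ => D.θ_nonneg k c (D.a k z)) (D.θ_sum_le k _) (D.t k z h)
    have h3 := norm_sub_le (D.t k z h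
      - ∑ c ∈ D.X k, D.θ k c (D.a k z) • (D.L k c).starProjection (D.t k z h))
      (∑ c ∈ D.X k, fderiv ℝ (D.θ k c) (D.a k z) (D.v k z h)
        • (D.L k c).starProjection (D.u k z))
    rw [← t_succ] at h3
    have h4 : K / D.r k * ‖D.v k z h‖ * (6 * δ * ‖D.u k z‖) * D.r k
        = 6 * (K * δ) * (‖D.v k z h‖ * ‖D.u k z‖) := by field_simp
    have h5 : ‖D.t (k + 1) z h‖ * D.r k ≤ 11 * (K * δ) * (‖D.v k z h‖ * ‖D.u k z‖) := by
      have := mul_le_mul_of_nonneg_right (h3.trans (add_le_add h2 h1)) hr.le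
      linarith
    have h6 : ‖D.v k z h‖ * ‖D.u k z‖
        ≤ (10 / 9 * ‖D.v (k + 1) z h‖) * (10 / 9 * ‖D.u (k + 1) z‖) :=
      mul_le_mul (D.norm_v_succ_comparable k z h).2 (D.norm_u_succ_comparable k z).2
        (norm_nonneg _) (by positivity)
    have h7 := mul_le_mul_of_nonneg_left h6 (mul_nonneg hK.le hδ)
    have h8 : 0 ≤ K * δ * (‖D.v (k + 1) z h‖ * ‖D.u (k + 1) z‖) := by positivity
    rw [D.r_succ]
    linarith

end FlatSystem

namespace FlatSystem

variable {H : Type*} [NormedAddCommGroup H] [InnerProductSpace ℝ H] [FiniteDimensional ℝ H]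
  {K δ M : ℝ} (D : FlatSystem H K δ M)

/-- The uncut parametrization at step `k`. -/
def A (k : ℕ) (z : H) : H := D.a k z + D.u k z

theorem A_zero (z : H) : D.A 0 z = z := by
  rw [A, a_zero, u_zero, perp_apply, add_sub_cancel]

theorem differentiable_A (k : ℕ) : Differentiable ℝ (D.A k) :=
  (D.differentiable_a k).add (D.differentiable_u k)

theorem fderiv_u (k : ℕ) (z h : H) :
    fderiv ℝ (D.u k) z h = D.s k z (perp D.base h) + D.t k z h := by
  rw [t, add_sub_cancel]

theorem fderiv_A (k : ℕ) (z h : H) :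
    fderiv ℝ (D.A k) z h = D.v k z h + D.s k z (perp D.base h) + D.t k z h := by
  have h1 : HasFDerivAt (D.A k) _ z :=
    (D.differentiable_a k z).hasFDerivAt.add (D.differentiable_u k z).hasFDerivAt
  rw [h1.fderiv, add_apply, D.fderiv_u, v, add_assoc]

/-- The size of the two components of the derivative of `A`. -/
def size (k : ℕ) (z h : H) : ℝ := ‖D.v k z h‖ + ‖D.s k z (perp D.base h)‖

theorem size_nonneg (k : ℕ) (z h : H) : 0 ≤ D.size k z h := by unfold size; positivity

theorem K_mul_δ_le (D : FlatSystem H K δ M) : K * δ ≤ 1 / 10 ^ 6 := by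
  linarith [D.δ_mul_K_le, mul_comm K δ]

theorem δ_le_K_mul (D : FlatSystem H K δ M) : δ ≤ K * δ :=
  le_mul_of_one_le_left D.δ_nonneg D.one_le_K

theorem norm_t_le {k : ℕ} {z : H} {m : ℝ} (hu : ‖D.u k z‖ ≤ m * D.r k) (h : H) :
    ‖D.t k z h‖ ≤ 5 * (K * δ) * m * ‖D.v k z h‖ := by
  have hr := D.r_pos k
  have h1 := D.norm_t_mul_r_le k z h
  have hδ := mul_nonneg D.K_pos.le D.δ_nonneg
  have h2 := mul_le_mul_of_nonneg_left (mul_le_mul_of_nonneg_left hu (norm_nonneg (D.v k z h))) hδ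
  refine le_of_mul_le_mul_right ?_ hr
  linarith

theorem size_comparable_norm (k : ℕ) (z h : H) :
    D.size k z h ≤ 2 * D.distortion * ‖h‖ ∧ ‖h‖ ≤ D.distortion * D.size k z h := by
  obtain ⟨h1, h2⟩ := D.norm_v_comparable_initial k z h
  obtain ⟨h3, h4⟩ := D.norm_s_comparable_initial k z (D.starProjection_base_perp h)
  have h5 : ‖D.base.starProjection h‖ ≤ ‖h‖ := D.base.norm_starProjection_apply_le h
  have h6 : ‖perp D.base h‖ ≤ ‖h‖ := norm_perp_le _ _
  have h7 : ‖h‖ ≤ ‖D.base.starProjection h‖ + ‖perp D.base h‖ := by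
    refine (norm_add_le _ _).trans' (le_of_eq ?_)
    rw [perp_apply, add_sub_cancel]
  have hΛ := D.one_le_distortion
  unfold size
  constructor <;> nlinarith

theorem norm_fderiv_A_comparable_size {k : ℕ} {z : H} (hu : ‖D.u k z‖ ≤ D.r k) (h : H) :
    ‖fderiv ℝ (D.A k) z h‖ ≤ 2 * D.size k z h ∧ D.size k z h ≤ 2 * ‖fderiv ℝ (D.A k) z h‖ := by
  have h1 := D.norm_t_le (m := 1) (by linarith) h
  have h2 := D.abs_inner_v_s_le k z h (D.starProjection_base_perp h)
  have h3 := D.K_mul_δ_le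
  have h4 : ‖D.t k z h‖ ≤ 1 / 100 * ‖D.v k z h‖ :=
    h1.trans (mul_le_mul_of_nonneg_right (by linarith) (norm_nonneg _))
  rw [D.fderiv_A, size]
  generalize D.v k z h = x at *
  generalize D.s k z (perp D.base h) = y at *
  generalize D.t k z h = w at *
  have hx := norm_nonneg x
  have hy := norm_nonneg y
  constructor
  · linarith [norm_add_le (x + y) w, norm_add_le x y]
  · have h5 : 6 / 10 * (‖x‖ + ‖y‖) ≤ ‖x + y‖ := by
      refine le_of_sq_le_sq ?_ (norm_nonneg _)
      rw [norm_add_sq_real]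
      nlinarith [neg_le_of_abs_le h2, sq_nonneg (‖x‖ - ‖y‖)]
    have h6 := norm_sub_le_norm_add (x + y) w
    linarith

theorem norm_A_succ_sub_le {k : ℕ} {z : H} (hu : ‖D.u k z‖ ≤ D.r k) :
    ‖D.A (k + 1) z - D.A k z‖ ≤ 1107 * δ * D.r k := by
  have h1 := D.norm_a_succ_sub k z
  have h2 : ‖D.u (k + 1) z - D.u k z‖ ≤ 7 * δ * ‖D.u k z‖ :=
    D.norm_s_succ_sub_le k z (D.starProjection_base_perp z)
  have h3 := mul_le_mul_of_nonneg_left hu D.δ_nonneg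
  have h4 : D.A (k + 1) z - D.A k z = (D.a (k + 1) z - D.a k z) + (D.u (k + 1) z - D.u k z) := by
    unfold A; abel
  rw [h4]
  linarith [norm_add_le (D.a (k + 1) z - D.a k z) (D.u (k + 1) z - D.u k z)]

theorem norm_fderiv_A_succ_sub_le {k : ℕ} {z : H} (hu : ‖D.u k z‖ ≤ D.r k) (h : H) :
    ‖fderiv ℝ (D.A (k + 1)) z h - fderiv ℝ (D.A k) z h‖ ≤ 6300 * (K * δ) * D.size k z h := by
  have hδ := mul_nonneg D.K_pos.le D.δ_nonneg
  have h1 := D.norm_t_le (m := 1) (by linarith) h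
  have h2 := D.norm_t_le (k := k + 1) (z := z) (m := 11)
    (by rw [D.r_succ]; linarith [(D.norm_u_succ_comparable k z).1]) h
  have h3 := mul_le_mul_of_nonneg_left (D.norm_v_succ_comparable k z h).1 hδ
  have h4 := D.norm_v_succ_sub_le k z h
  have h5 := D.norm_s_succ_sub_le k z (D.starProjection_base_perp h)
  have h6 := mul_le_mul_of_nonneg_right D.δ_le_K_mul (norm_nonneg (D.s k z (perp D.base h)))
  rw [D.fderiv_A, D.fderiv_A, size]
  have h7 : 0 ≤ K * δ * ‖D.v k z h‖ := by positivity
  have h8 : 0 ≤ K * δ * ‖D.s k z (perp D.base h)‖ := by positivity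
  generalize D.v k z h = x at *
  generalize D.s k z (perp D.base h) = y at *
  generalize D.t k z h = w at *
  generalize D.v (k + 1) z h = x' at *
  generalize D.s (k + 1) z (perp D.base h) = y' at *
  generalize D.t (k + 1) z h = w' at *
  have h9 : x' + y' + w' - (x + y + w) = (x' - x) + (y' - y) + (w' - w) := by abel
  rw [h9]
  have h10 := norm_sub_le w' w
  linarith [norm_add_le (x' - x + (y' - y)) (w' - w), norm_add_le (x' - x) (y' - y), h10]

/-- The cutoff switching off the construction away from `E`. -/
def cut (k : ℕ) (z : H) : ℝ := D.χ (‖D.u k z‖ ^ 2 / D.r k ^ 2)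

theorem cut_nonneg (k : ℕ) (z : H) : 0 ≤ D.cut k z := D.χ_nonneg _

theorem norm_u_lt_of_cut_ne_zero {k : ℕ} {z : H} (h : D.cut k z ≠ 0) : ‖D.u k z‖ < D.r k := by
  by_contra! h1
  have hr := D.r_pos k
  exact h (D.χ_eq_zero _ ((one_le_div (by positivity)).2 (pow_le_pow_left₀ hr.le h1 2)))

theorem cut_eq_one {k : ℕ} {z : H} (h : ‖D.u k z‖ ≤ 3 / 4 * D.r k) : D.cut k z = 1 := by
  have hr := D.r_pos k
  refine D.χ_eq_one _ ((div_le_iff₀ (by positivity)).2 ?_)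
  have := pow_le_pow_left₀ (norm_nonneg _) h 2
  linarith

theorem cut_eq_one_of_succ {k : ℕ} {z : H} (h : D.cut (k + 1) z ≠ 0) : D.cut k z = 1 := by
  have h1 := D.norm_u_lt_of_cut_ne_zero h
  rw [D.r_succ] at h1
  exact D.cut_eq_one (by linarith [(D.norm_u_succ_comparable k z).2, D.r_pos k])

theorem hasFDerivAt_cut (k : ℕ) (z : H) : HasFDerivAt (D.cut k)
    ((deriv D.χ (‖D.u k z‖ ^ 2 / D.r k ^ 2)) •
      ((D.r k ^ 2)⁻¹ • (2 • (innerSL ℝ (D.u k z)).comp (fderiv ℝ (D.u k) z)))) z := by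
  have h1 := (D.differentiable_u k z).hasFDerivAt.norm_sq
  have h2 := h1.const_mul ((D.r k ^ 2)⁻¹)
  have h3 := (D.χ_diff ((D.r k ^ 2)⁻¹ * ‖D.u k z‖ ^ 2)).hasDerivAt.comp_hasFDerivAt z h2
  have h4 : D.cut k = D.χ ∘ fun y => (D.r k ^ 2)⁻¹ * ‖D.u k y‖ ^ 2 := by
    funext y
    rw [cut, div_eq_inv_mul, Function.comp_apply]
  rw [h4, div_eq_inv_mul]
  exact h3

theorem differentiable_cut (k : ℕ) : Differentiable ℝ (D.cut k) := fun z =>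
  (D.hasFDerivAt_cut k z).differentiableAt

theorem fderiv_cut_of_eq_zero {k : ℕ} {z : H} (h : D.cut k z = 0) : fderiv ℝ (D.cut k) z = 0 :=
  IsLocalMin.fderiv_eq_zero (Filter.Eventually.of_forall fun y => by rw [h]; exact D.χ_nonneg _)

theorem fderiv_cut_of_eq_one {k : ℕ} {z : H} (h : D.cut k z = 1) : fderiv ℝ (D.cut k) z = 0 :=
  IsLocalMax.fderiv_eq_zero (Filter.Eventually.of_forall fun y => by rw [h]; exact D.χ_le_one _)

theorem abs_fderiv_cut_mul_r_le {k : ℕ} {z : H} (hu : ‖D.u k z‖ ≤ D.r k) (h : H) :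
    |fderiv ℝ (D.cut k) z h| * D.r k ≤ 2 * K * D.size k z h := by
  have hr := D.r_pos k
  have hK := D.K_pos
  have h1 : ‖fderiv ℝ (D.u k) z h‖ ≤ D.size k z h := by
    rw [D.fderiv_u, size]
    have h2 := D.norm_t_le (m := 1) (by linarith) h
    have h3 : ‖D.t k z h‖ ≤ 1 * ‖D.v k z h‖ :=
      h2.trans (mul_le_mul_of_nonneg_right (by linarith [D.K_mul_δ_le]) (norm_nonneg _))
    linarith [norm_add_le (D.s k z (perp D.base h)) (D.t k z h)]
  have h2 : |inner ℝ (D.u k z) (fderiv ℝ (D.u k) z h)| ≤ D.r k * D.size k z h :=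
    (abs_real_inner_le_norm _ _).trans (mul_le_mul hu h1 (norm_nonneg _) hr.le)
  have h3 : |fderiv ℝ (D.cut k) z h| = |deriv D.χ (‖D.u k z‖ ^ 2 / D.r k ^ 2)|
      * ((D.r k ^ 2)⁻¹ * (2 * |inner ℝ (D.u k z) (fderiv ℝ (D.u k) z h)|)) := by
    rw [(D.hasFDerivAt_cut k z).fderiv]
    simp [abs_mul]
  rw [h3]
  have h4 : |deriv D.χ (‖D.u k z‖ ^ 2 / D.r k ^ 2)|
      * ((D.r k ^ 2)⁻¹ * (2 * |inner ℝ (D.u k z) (fderiv ℝ (D.u k) z h)|))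
      ≤ K * ((D.r k ^ 2)⁻¹ * (2 * (D.r k * D.size k z h))) :=
    mul_le_mul (D.χ_deriv _) (by gcongr) (by positivity) hK.le
  refine (mul_le_mul_of_nonneg_right h4 hr.le).trans_eq ?_
  field_simp

/-- The smooth approximations of the parametrization. -/
def g : ℕ → H → H
  | 0, z => z
  | k + 1, z => g k z + D.cut k z • (D.A (k + 1) z - D.A k z)

theorem g_succ (k : ℕ) (z : H) :
    D.g (k + 1) z = D.g k z + D.cut k z • (D.A (k + 1) z - D.A k z) := rfl

theorem differentiable_g (k : ℕ) : Differentiable ℝ (D.g k) := by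
  induction k with
  | zero => exact differentiable_id
  | succ k ih =>
    exact ih.add ((D.differentiable_cut k).smul
      ((D.differentiable_A (k + 1)).sub (D.differentiable_A k)))

theorem fderiv_g_succ (k : ℕ) (z h : H) : fderiv ℝ (D.g (k + 1)) z h = fderiv ℝ (D.g k) z h
    + (D.cut k z • (fderiv ℝ (D.A (k + 1)) z h - fderiv ℝ (D.A k) z h)
      + fderiv ℝ (D.cut k) z h • (D.A (k + 1) z - D.A k z)) := by
  have h1 : HasFDerivAt (D.g (k + 1)) _ z := (D.differentiable_g k z).hasFDerivAt.add
    ((D.differentiable_cut k z).hasFDerivAt.smul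
      ((D.differentiable_A (k + 1) z).hasFDerivAt.sub (D.differentiable_A k z).hasFDerivAt))
  rw [h1.fderiv]
  simp

theorem g_eq_A_of_cut_eq_one (k : ℕ) (z : H) : D.cut k z = 1 →
    D.g (k + 1) z = D.A (k + 1) z ∧
      ∀ h, fderiv ℝ (D.g (k + 1)) z h = fderiv ℝ (D.A (k + 1)) z h := by
  have hstep : ∀ k, D.cut k z = 1 → D.g k z = D.A k z →
      (∀ h, fderiv ℝ (D.g k) z h = fderiv ℝ (D.A k) z h) → D.g (k + 1) z = D.A (k + 1) z ∧
      ∀ h, fderiv ℝ (D.g (k + 1)) z h = fderiv ℝ (D.A (k + 1)) z h := by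
    intro k hk h1 h2
    refine ⟨by rw [g_succ, h1, hk, one_smul, add_sub_cancel], fun h => ?_⟩
    rw [fderiv_g_succ, h2, hk, D.fderiv_cut_of_eq_one hk, one_smul]
    simp
  induction k with
  | zero =>
    intro hk
    refine hstep 0 hk (D.A_zero z).symm fun h => ?_
    rw [show D.g 0 = D.A 0 from funext fun z => (D.A_zero z).symm]
  | succ k ih =>
    intro hk
    obtain ⟨h1, h2⟩ := ih (D.cut_eq_one_of_succ (by rw [hk]; exact one_ne_zero))
    exact hstep (k + 1) hk h1 h2

theorem fderiv_g_eq_of_cut_ne_zero {k : ℕ} {z : H} (hk : D.cut k z ≠ 0) (h : H) :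
    fderiv ℝ (D.g k) z h = fderiv ℝ (D.A k) z h := by
  cases k with
  | zero => rw [show D.g 0 = D.A 0 from funext fun z => (D.A_zero z).symm]
  | succ k => exact (D.g_eq_A_of_cut_eq_one k z (D.cut_eq_one_of_succ hk)).2 h

theorem fderiv_g_succ_of_cut_eq_zero {k : ℕ} {z : H} (hk : D.cut k z = 0) (h : H) :
    fderiv ℝ (D.g (k + 1)) z h = fderiv ℝ (D.g k) z h := by
  rw [fderiv_g_succ, hk, D.fderiv_cut_of_eq_zero hk]
  simp

theorem norm_fderiv_g_succ_sub_le (k : ℕ) (z h : H) :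
    ‖fderiv ℝ (D.g (k + 1)) z h - fderiv ℝ (D.g k) z h‖
      ≤ 1 / 2 * ‖fderiv ℝ (D.g k) z h‖ := by
  by_cases hk : D.cut k z = 0
  · rw [D.fderiv_g_succ_of_cut_eq_zero hk, sub_self, norm_zero]
    positivity
  · have hu := (D.norm_u_lt_of_cut_ne_zero hk).le
    rw [D.fderiv_g_eq_of_cut_ne_zero hk, fderiv_g_succ, D.fderiv_g_eq_of_cut_ne_zero hk,
      add_sub_cancel_left]
    have h1 := (D.norm_fderiv_A_comparable_size hu h).2
    have h2 : ‖D.cut k z • (fderiv ℝ (D.A (k + 1)) z h - fderiv ℝ (D.A k) z h)‖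
        ≤ 6300 * (K * δ) * D.size k z h := by
      rw [norm_smul, Real.norm_of_nonneg (D.cut_nonneg k z)]
      exact (mul_le_of_le_one_left (norm_nonneg _) (D.χ_le_one (‖D.u k z‖ ^ 2 / D.r k ^ 2))).trans
        (D.norm_fderiv_A_succ_sub_le hu h)
    have h3 : ‖fderiv ℝ (D.cut k) z h • (D.A (k + 1) z - D.A k z)‖
        ≤ 2214 * (K * δ) * D.size k z h := by
      rw [norm_smul, Real.norm_eq_abs]
      have h4 := mul_le_mul_of_nonneg_left (D.norm_A_succ_sub_le hu)
        (abs_nonneg (fderiv ℝ (D.cut k) z h))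
      have h5 := mul_le_mul_of_nonneg_left (D.abs_fderiv_cut_mul_r_le hu h) D.δ_nonneg
      linarith
    have h6 := mul_le_mul_of_nonneg_right D.K_mul_δ_le (D.size_nonneg k z h)
    refine (norm_add_le _ _).trans ?_
    linarith [D.size_nonneg k z h]

theorem norm_fderiv_g_comparable (k : ℕ) (z h : H) :
    ‖fderiv ℝ (D.g k) z h‖ ≤ 6 * D.distortion * ‖h‖ ∧
      ‖h‖ ≤ 6 * D.distortion * ‖fderiv ℝ (D.g k) z h‖ := by
  have hΛ := D.one_le_distortion
  induction k with
  | zero =>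
    have : D.g 0 = id := rfl
    rw [this, fderiv_id, ContinuousLinearMap.id_apply]
    have := le_mul_of_one_le_left (norm_nonneg h) (by linarith : 1 ≤ 6 * D.distortion)
    exact ⟨this, this⟩
  | succ k ih =>
    by_cases hk : D.cut k z = 0
    · rwa [D.fderiv_g_succ_of_cut_eq_zero hk]
    · have h1 := D.norm_fderiv_g_succ_sub_le k z h
      obtain ⟨h2, h3⟩ := D.norm_fderiv_A_comparable_size (D.norm_u_lt_of_cut_ne_zero hk).le h
      obtain ⟨h4, h5⟩ := D.size_comparable_norm k z h
      rw [← D.fderiv_g_eq_of_cut_ne_zero hk] at h2 h3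
      have h6 := norm_le_norm_add_norm_sub' (fderiv ℝ (D.g (k + 1)) z h) (fderiv ℝ (D.g k) z h)
      have h7 := norm_le_norm_add_norm_sub (fderiv ℝ (D.g (k + 1)) z h) (fderiv ℝ (D.g k) z h)
      have h8 : D.size k z h ≤ 4 * ‖fderiv ℝ (D.g (k + 1)) z h‖ := by linarith
      have h9 := mul_le_mul_of_nonneg_left h8 (zero_le_one.trans hΛ)
      have h10 : 0 ≤ D.distortion * ‖fderiv ℝ (D.g (k + 1)) z h‖ := by positivity
      constructor <;> linarith

theorem norm_g_succ_sub_le (k : ℕ) (z : H) :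
    ‖D.g (k + 1) z - D.g k z‖ ≤ 1107 * δ * D.r k := by
  rw [g_succ, add_sub_cancel_left, norm_smul, Real.norm_of_nonneg (D.cut_nonneg k z)]
  by_cases hk : D.cut k z = 0
  · have := D.r_pos k
    have := D.δ_nonneg
    rw [hk, zero_mul]
    positivity
  · exact (mul_le_of_le_one_left (norm_nonneg _) (D.χ_le_one (‖D.u k z‖ ^ 2 / D.r k ^ 2))).trans
      (D.norm_A_succ_sub_le (D.norm_u_lt_of_cut_ne_zero hk).le)

/-- The smooth approximations converge to a bi-Lipschitz surjection. -/
theorem exists_parametrization : ∃ G : H → H, Function.Surjective G ∧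
    (∀ x y, ‖G x - G y‖ ≤ 6 * D.distortion * ‖x - y‖ ∧
      ‖x - y‖ ≤ 6 * D.distortion * ‖G x - G y‖) ∧
    ∀ k z, ‖G z - D.g k z‖ ≤ 2214 * δ * D.r k := by
  have hΛ := D.one_le_distortion
  have hchain := bijective_bilipschitz_of_chain (g := D.g) (C := 6 * D.distortion) (by linarith)
    rfl D.differentiable_g (fun k z h => (D.norm_fderiv_g_comparable k z h).1)
    (fun k z h => (D.norm_fderiv_g_comparable k z h).2) D.norm_fderiv_g_succ_sub_le
  obtain ⟨G, h1, h2, h3⟩ := exists_limit_bilipschitz (g := D.g) (C := 6 * D.distortion)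
    (c := 1107 * δ * D.r₀) (by have := D.δ_nonneg; have := D.r₀_pos; positivity)
    (fun k => (hchain k).1) (fun k => (hchain k).2)
    (fun k z => (D.norm_g_succ_sub_le k z).trans_eq (by rw [r, mul_div_assoc]))
  refine ⟨G, h1, h2, fun k z => (h3 k z).trans_eq ?_⟩
  rw [r]
  ring

theorem exists_norm_u_ge {z : H} (hz : perp D.base z ≠ 0) : ∃ k, 3 / 4 * D.r k ≤ ‖D.u k z‖ := by
  by_contra! h
  have h1 : ∀ k, ‖perp D.base z‖ ≤ D.distortion * D.r₀ * (1 / 10) ^ k := fun k => by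
    have h2 := (D.norm_s_comparable_initial k z (D.starProjection_base_perp z)).2
    have hr := D.r_pos k
    have h3 : ‖D.u k z‖ ≤ D.r k := by linarith [h k]
    refine h2.trans ((mul_le_mul_of_nonneg_left h3
      (zero_le_one.trans D.one_le_distortion)).trans_eq ?_)
    rw [r, one_div, inv_pow, div_eq_mul_inv, mul_assoc]
  have h2 : Filter.Tendsto (fun k : ℕ => D.distortion * D.r₀ * (1 / 10 : ℝ) ^ k) Filter.atTop
      (nhds (D.distortion * D.r₀ * 0)) :=
    (tendsto_pow_atTop_nhds_zero_of_lt_one (by norm_num) (by norm_num)).const_mul _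
  rw [mul_zero] at h2
  exact hz (norm_le_zero_iff.1 (ge_of_tendsto' h2 h1))

/-- Points of `E` are only attained on the base plane. -/
theorem mem_base_of_apply_mem {G : H → H} (hG : ∀ k z, ‖G z - D.g k z‖ ≤ 2214 * δ * D.r k) {z : H}
    (he : G z ∈ D.E) : z ∈ D.base := by
  by_contra hz
  have hz' : perp D.base z ≠ 0 := fun h => hz <| by
    rw [perp_apply, sub_eq_zero] at h
    rw [h]
    exact D.base.starProjection_apply_mem z
  have hδ := D.δ_nonneg
  have hδ' := D.δ_le
  obtain ⟨m, hm, hmin⟩ := Nat.findX (D.exists_norm_u_ge hz')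
  have hr := D.r_pos m
  have hδr := mul_le_mul_of_nonneg_right hδ' hr.le
  have hb := mul_le_mul_of_nonneg_right (D.b_le _ he m) hr.le
  have hGm := hG m z
  cases m with
  | zero =>
    have h1 := D.flat_zero _ he
    rw [← D.r_zero] at h1
    have h2 := norm_perp_le D.base (G z - z)
    rw [map_sub] at h2
    have h3 := norm_le_norm_add_norm_sub (perp D.base (G z)) (perp D.base z)
    rw [u_zero] at hm
    rw [show D.g 0 z = z from rfl] at hGm
    linarith
  | succ m =>
    have h1 := hmin m m.lt_succ_self
    push Not at h1
    have h2 := (D.norm_u_succ_comparable m z).1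
    have hrs := D.r_succ m
    rw [(D.g_eq_A_of_cut_eq_one m z (D.cut_eq_one h1.le)).1, A] at hGm
    have h3 : ‖D.a (m + 1) z - G z‖ ≤ 50 * D.r (m + 1) := by
      have h4 : D.a (m + 1) z - G z
          = -(G z - (D.a (m + 1) z + D.u (m + 1) z)) - D.u (m + 1) z := by abel
      rw [h4]
      refine (norm_sub_le _ _).trans ?_
      rw [norm_neg]
      linarith
    have h5 := D.norm_perp_a_sub_le (m + 1) z _ he h3
    have h6 : ‖(D.L (m + 1) (G z)).starProjection (D.u (m + 1) z)‖ ≤ _ :=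
      D.norm_starProjection_s_le (m + 1) z (D.starProjection_base_perp z) _ he h3
    have h7 := norm_perp_le (D.L (m + 1) (G z)) (G z - (D.a (m + 1) z + D.u (m + 1) z))
    have h8 : D.u (m + 1) z = (D.L (m + 1) (G z)).starProjection (D.u (m + 1) z)
        - (perp (D.L (m + 1) (G z)) (G z - (D.a (m + 1) z + D.u (m + 1) z))
          + perp (D.L (m + 1) (G z)) (D.a (m + 1) z - G z)) := by
      rw [← map_add]
      simp only [perp_apply, map_add, map_sub]
      abel
    have h9 : ‖D.u (m + 1) z‖ ≤ ‖(D.L (m + 1) (G z)).starProjection (D.u (m + 1) z)‖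
        + (‖perp (D.L (m + 1) (G z)) (G z - (D.a (m + 1) z + D.u (m + 1) z))‖
          + ‖perp (D.L (m + 1) (G z)) (D.a (m + 1) z - G z)‖) := by
      conv_lhs => rw [h8]
      exact (norm_sub_le _ _).trans (by gcongr; exact norm_add_le _ _)
    have h10 : D.b (G z) (m + 1) * ‖D.u (m + 1) z‖ ≤ 1 / 10 ^ 6 * ‖D.u (m + 1) z‖ :=
      mul_le_mul_of_nonneg_right ((D.b_le _ he _).trans hδ') (norm_nonneg _)
    have h11 : D.s (m + 1) z (perp D.base z) = D.u (m + 1) z := rfl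
    rw [h11] at h6
    linarith

theorem g_eq_a_of_mem_base {z : H} (hz : z ∈ D.base) (k : ℕ) : D.g k z = D.a k z := by
  have hu : ∀ k, D.u k z = 0 := by
    intro k
    induction k with
    | zero => exact perp_eq_zero_of_mem hz
    | succ k ih => rw [u_succ, ih]; simp
  cases k with
  | zero => exact (Submodule.starProjection_eq_self_iff.2 hz).symm
  | succ k =>
    have hr := D.r_pos k
    rw [(D.g_eq_A_of_cut_eq_one k z (D.cut_eq_one (by rw [hu, norm_zero]; positivity))).1, A, hu,
      add_zero]

/-- The parametrization maps the base plane into `E`, near the origin. -/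
theorem apply_mem_of_mem_base {G : H → H} (hG : ∀ k z, ‖G z - D.g k z‖ ≤ 2214 * δ * D.r k)
    {F : Set H} (hF : IsClosed F) (hEF : D.E ⊆ F) (hFE : ∀ e ∈ F, ‖e‖ ≤ 5 → e ∈ D.E)
    (hr₀ : D.r₀ ≤ 1)
    (hbase : ∀ z ∈ D.base, ‖z‖ ≤ 2 → ∃ e ∈ F, ‖z - e‖ ≤ δ * D.r₀)
    (hplane : ∀ e ∈ D.E, ∀ k y, ‖y - e‖ ≤ 10 * D.r k → perp (D.L k e) (y - e) = 0 →
      ∃ e' ∈ F, ‖y - e'‖ ≤ δ * D.r k)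
    {z : H} (hz : z ∈ D.base) (hGz : ‖G z‖ < 1) : G z ∈ F := by
  have hδ := D.δ_nonneg
  have hδ' := D.δ_le
  have hr1 : ∀ k, D.r k ≤ 1 := fun k => by
    refine (div_le_self D.r₀_pos.le (one_le_pow₀ (by norm_num))).trans hr₀
  have hGa : ∀ k, ‖G z - D.a k z‖ ≤ 1 / 100 * D.r k := fun k => by
    rw [← D.g_eq_a_of_mem_base hz]
    exact (hG k z).trans (mul_le_mul_of_nonneg_right (by linarith) (D.r_pos k).le)
  have ha : ∀ k, ‖D.a k z‖ ≤ 2 := fun k => by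
    linarith [norm_le_norm_add_norm_sub (G z) (D.a k z), hGa k, hr1 k]
  have hnear : ∀ k, ∃ e ∈ D.E, ‖D.a k z - e‖ ≤ D.r k := by
    have hmem : ∀ k, ∀ e ∈ F, ‖D.a k z - e‖ ≤ D.r k → e ∈ D.E := fun k e he h =>
      hFE e he (by linarith [norm_le_norm_add_norm_sub (D.a k z) e, ha k, hr1 k])
    intro k
    induction k with
    | zero =>
      have h0 : D.a 0 z = z := Submodule.starProjection_eq_self_iff.2 hz
      obtain ⟨e, he, h⟩ := hbase z hz (h0 ▸ ha 0)
      have h1 : ‖D.a 0 z - e‖ ≤ D.r 0 := by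
        rw [h0, D.r_zero]
        nlinarith [D.r₀_pos]
      exact ⟨e, hmem 0 e he h1, h1⟩
    | succ k ih =>
      obtain ⟨e, he, h⟩ := ih
      have hr := D.r_pos k
      have h1 := D.norm_perp_a_succ he (by linarith : ‖D.a k z - e‖ ≤ 10 * D.r k)
      have h2 := D.norm_a_succ_sub k z
      have hδr := mul_le_mul_of_nonneg_right hδ' hr.le
      have hb := mul_le_mul_of_nonneg_right (D.b_le _ he k) hr.le
      have h3 : ‖D.a (k + 1) z - e‖ ≤ 10 * D.r k := by
        linarith [norm_sub_le_norm_sub_add_norm_sub (D.a (k + 1) z) (D.a k z) e]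
      obtain ⟨e', he', h4⟩ := hplane e he k
        (e + (D.L k e).starProjection (D.a (k + 1) z - e))
        (by
          rw [add_sub_cancel_left]
          exact ((D.L k e).norm_starProjection_apply_le _).trans h3)
        (by rw [add_sub_cancel_left, perp_starProjection])
      have h5 : D.a (k + 1) z - e' = perp (D.L k e) (D.a (k + 1) z - e)
          + (e + (D.L k e).starProjection (D.a (k + 1) z - e) - e') := by
        rw [perp_apply]; abel
      have h6 : ‖D.a (k + 1) z - e'‖ ≤ D.r (k + 1) := by
        rw [h5, D.r_succ]
        refine (norm_add_le _ _).trans ?_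
        linarith
      exact ⟨e', hmem (k + 1) e' he' h6, h6⟩
  rw [← hF.closure_eq, Metric.mem_closure_iff]
  intro ε hε
  obtain ⟨k, hk⟩ := exists_pow_lt_of_lt_one (half_pos hε) (by norm_num : (1 / 10 : ℝ) < 1)
  obtain ⟨e, he, h⟩ := hnear k
  refine ⟨e, hEF he, ?_⟩
  have h1 : D.r k ≤ (1 / 10) ^ k := by
    rw [r, one_div, inv_pow, div_eq_mul_inv]
    exact mul_le_of_le_one_left (by positivity) hr₀
  rw [dist_eq_norm]
  linarith [norm_sub_le_norm_sub_add_norm_sub (G z) (D.a k z) e, hGa k, D.r_pos k]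

end FlatSystem

theorem abs_deriv_smoothTransition_bounded :
    ∃ B : ℝ, 0 ≤ B ∧ ∀ x, |deriv Real.smoothTransition x| ≤ B := by
  have hcont : Continuous (deriv Real.smoothTransition) :=
    (Real.smoothTransition.contDiff (n := 1)).continuous_deriv le_rfl
  obtain ⟨B, hB⟩ := (isCompact_Icc (a := (0 : ℝ)) (b := 1)).exists_bound_of_continuousOn
    hcont.continuousOn
  have h0 : 0 ≤ B := (norm_nonneg _).trans (hB 0 (by simp))
  refine ⟨B, h0, fun x => ?_⟩
  by_cases hx : x ∈ Icc (0 : ℝ) 1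
  · exact hB x hx
  · have hd : deriv Real.smoothTransition x = 0 := by
      rw [mem_Icc, not_and_or, not_le, not_le] at hx
      rcases hx with hx | hx
      · refine IsLocalMin.deriv_eq_zero (Filter.Eventually.of_forall fun y => ?_)
        rw [Real.smoothTransition.zero_of_nonpos hx.le]
        exact Real.smoothTransition.nonneg y
      · refine IsLocalMax.deriv_eq_zero (Filter.Eventually.of_forall fun y => ?_)
        rw [Real.smoothTransition.one_of_one_le hx.le]
        exact Real.smoothTransition.le_one y
    rwa [hd, abs_zero]

/-- A smooth cutoff of the half-line `[9/16, 1]`. -/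
structure IsCutoff (χ : ℝ → ℝ) (B : ℝ) : Prop where
  diff : Differentiable ℝ χ
  nonneg : ∀ x, 0 ≤ χ x
  le_one : ∀ x, χ x ≤ 1
  eq_one : ∀ x, x ≤ 9 / 16 → χ x = 1
  eq_zero : ∀ x, 1 ≤ x → χ x = 0
  deriv_le : ∀ x, |deriv χ x| ≤ B

theorem exists_isCutoff : ∃ (χ : ℝ → ℝ) (B : ℝ), 1 ≤ B ∧ IsCutoff χ B := by
  obtain ⟨B, hB0, hB⟩ := abs_deriv_smoothTransition_bounded
  have hd : Differentiable ℝ Real.smoothTransition :=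
    (Real.smoothTransition.contDiff (n := 1)).differentiable one_ne_zero
  have hderiv : ∀ x : ℝ, HasDerivAt (fun x => Real.smoothTransition ((1 - x) * (16 / 7)))
      (deriv Real.smoothTransition ((1 - x) * (16 / 7)) * (-1 * (16 / 7))) x := fun x =>
    (hd _).hasDerivAt.comp x (((hasDerivAt_id x).const_sub 1).mul_const (16 / 7))
  refine ⟨fun x => Real.smoothTransition ((1 - x) * (16 / 7)), 3 * B + 1, by linarith,
    fun x => (hderiv x).differentiableAt, fun x => Real.smoothTransition.nonneg _,
    fun x => Real.smoothTransition.le_one _,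
    fun x hx => Real.smoothTransition.one_of_one_le (by linarith),
    fun x hx => Real.smoothTransition.zero_of_nonpos (by linarith), fun x => ?_⟩
  rw [(hderiv x).deriv, abs_mul]
  have h1 := hB ((1 - x) * (16 / 7))
  have h2 : |(-1 * (16 / 7) : ℝ)| = 16 / 7 := by norm_num
  rw [h2]
  linarith

section Partition

variable {H ι : Type*} [NormedAddCommGroup H] [NormedSpace ℝ H] [DecidableEq ι]

open Classical in
/-- A subordinate partition of unity whose derivatives are controlled by the overlap. -/
theorem exists_partition_of_bumps (φ : ι → H → ℝ) (hd : ∀ c, Differentiable ℝ (φ c))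
    (h0 : ∀ c z, 0 ≤ φ c z) (h1 : ∀ c z, φ c z ≤ 1) {B : ℝ} (hB0 : 0 ≤ B)
    (hB : ∀ c z v, |fderiv ℝ (φ c) z v| ≤ B * ‖v‖) (X : Finset ι) :
    ∃ θ : ι → H → ℝ, (∀ c, Differentiable ℝ (θ c)) ∧ (∀ c z, 0 ≤ θ c z) ∧
      (∀ c z, θ c z ≠ 0 → φ c z ≠ 0) ∧ (∀ z, ∑ c ∈ X, θ c z ≤ 1) ∧
      (∀ z, ∀ c ∈ X, φ c z = 1 → ∑ c ∈ X, θ c z = 1) ∧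
      (∀ z v, |∑ c ∈ X, fderiv ℝ (θ c) z v| ≤ (X.filter (φ · z ≠ 0)).card * (B * ‖v‖)) ∧
      ∀ z v, ∑ c ∈ X, |fderiv ℝ (θ c) z v| ≤ (X.filter (φ · z ≠ 0)).card ^ 2 * (B * ‖v‖) := by
  induction X using Finset.induction_on with
  | empty => exact ⟨fun _ _ => 0, by simp⟩
  | insert i X hi ih =>
    obtain ⟨θ, hθd, hθ0, hθφ, hθ1, hθeq, hθs, hθt⟩ := ih
    have hσ : Differentiable ℝ (fun z => ∑ c ∈ X, θ c z) :=
      Differentiable.fun_sum fun c _ => hθd c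
    have hσ' : ∀ z v, fderiv ℝ (fun z => ∑ c ∈ X, θ c z) z v = ∑ c ∈ X, fderiv ℝ (θ c) z v := by
      intro z v
      rw [fderiv_fun_sum fun c _ => hθd c z, sum_apply]
    set θ' : ι → H → ℝ :=
      Function.update θ i (fun z => φ i z * (1 - ∑ c ∈ X, θ c z)) with hθ'
    have hi' : θ' i = fun z => φ i z * (1 - ∑ c ∈ X, θ c z) := Function.update_self ..
    have hne : ∀ c, c ≠ i → θ' c = θ c := fun c hc => Function.update_of_ne hc ..
    have hX : ∀ c ∈ X, θ' c = θ c := fun c hc => hne c fun h => hi (h ▸ hc)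
    have hsum : ∀ z, ∑ c ∈ insert i X, θ' c z
        = 1 - (1 - φ i z) * (1 - ∑ c ∈ X, θ c z) := fun z => by
      rw [Finset.sum_insert hi, hi', Finset.sum_congr rfl fun c hc => by rw [hX c hc]]
      ring
    have hfd : ∀ z v, fderiv ℝ (θ' i) z v = fderiv ℝ (φ i) z v * (1 - ∑ c ∈ X, θ c z)
        - φ i z * ∑ c ∈ X, fderiv ℝ (θ c) z v := fun z v => by
      have h2 : HasFDerivAt (fun z => φ i z * (1 - ∑ c ∈ X, θ c z)) _ z :=
        (hd i z).hasFDerivAt.mul ((hσ z).hasFDerivAt.const_sub 1)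
      rw [hi', h2.fderiv, ← hσ']
      simp
      ring
    have hφ0 : ∀ z, φ i z = 0 → fderiv ℝ (φ i) z = 0 := fun z hz =>
      IsLocalMin.fderiv_eq_zero (Filter.Eventually.of_forall fun y => by rw [hz]; exact h0 i y)
    have hfd0 : ∀ z v, φ i z = 0 → fderiv ℝ (θ' i) z v = 0 := fun z v hz => by
      rw [hfd, hφ0 z hz, hz]; simp
    have hσ0 : ∀ z, 0 ≤ ∑ c ∈ X, θ c z := fun z => Finset.sum_nonneg fun c _ => hθ0 c z
    have hcard : ∀ z, φ i z ≠ 0 → (((insert i X).filter (φ · z ≠ 0)).card : ℝ)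
        = (X.filter (φ · z ≠ 0)).card + 1 := fun z hz => by
      rw [Finset.filter_insert, if_pos hz, Finset.card_insert_of_notMem (by simp [hi])]
      push_cast
      rfl
    have hcard0 : ∀ z, φ i z = 0 → (insert i X).filter (φ · z ≠ 0) = X.filter (φ · z ≠ 0) :=
      fun z hz => by rw [Finset.filter_insert, if_neg (by simpa using hz)]
    refine ⟨θ', fun c => ?_, fun c z => ?_, fun c z => ?_, fun z => ?_, fun z c hc hcz => ?_,
      fun z v => ?_, fun z v => ?_⟩
    · by_cases hc : c = i
      · rw [hc, hi']
        exact (hd i).mul (hσ.const_sub 1)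
      · rw [hne c hc]; exact hθd c
    · by_cases hc : c = i
      · rw [hc, hi']
        exact mul_nonneg (h0 i z) (sub_nonneg.2 (hθ1 z))
      · rw [hne c hc]; exact hθ0 c z
    · by_cases hc : c = i
      · rw [hc, hi']
        exact left_ne_zero_of_mul
      · rw [hne c hc]; exact hθφ c z
    · rw [hsum]
      nlinarith [h1 i z, hθ1 z]
    · rw [hsum]
      rcases Finset.mem_insert.1 hc with rfl | hc
      · rw [hcz]; ring
      · rw [hθeq z c hc hcz]; ring
    · rw [Finset.sum_insert hi, Finset.sum_congr rfl fun c hc => by rw [hX c hc]]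
      by_cases hz : φ i z = 0
      · rw [hfd0 z v hz, hcard0 z hz, zero_add]
        exact hθs z v
      · rw [hcard z hz, hfd]
        have h2 : fderiv ℝ (φ i) z v * (1 - ∑ c ∈ X, θ c z)
            - φ i z * ∑ c ∈ X, fderiv ℝ (θ c) z v + ∑ c ∈ X, fderiv ℝ (θ c) z v
            = fderiv ℝ (φ i) z v * (1 - ∑ c ∈ X, θ c z)
              + (1 - φ i z) * ∑ c ∈ X, fderiv ℝ (θ c) z v := by ring
        rw [h2]
        refine (abs_add_le _ _).trans ?_
        rw [abs_mul, abs_mul, abs_of_nonneg (sub_nonneg.2 (hθ1 z)),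
          abs_of_nonneg (sub_nonneg.2 (h1 i z))]
        have h3 := mul_le_of_le_one_right (abs_nonneg (fderiv ℝ (φ i) z v))
          (by linarith [hσ0 z] : 1 - ∑ c ∈ X, θ c z ≤ 1)
        have h4 := mul_le_of_le_one_left (abs_nonneg (∑ c ∈ X, fderiv ℝ (θ c) z v))
          (by linarith [h0 i z] : 1 - φ i z ≤ 1)
        linarith [hB i z v, hθs z v]
    · rw [Finset.sum_insert hi, Finset.sum_congr rfl fun c hc => by rw [hX c hc]]
      by_cases hz : φ i z = 0
      · rw [hfd0 z v hz, hcard0 z hz, abs_zero, zero_add]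
        exact hθt z v
      · rw [hcard z hz, hfd]
        have h2 := abs_sub (fderiv ℝ (φ i) z v * (1 - ∑ c ∈ X, θ c z))
          (φ i z * ∑ c ∈ X, fderiv ℝ (θ c) z v)
        rw [abs_mul, abs_mul, abs_of_nonneg (sub_nonneg.2 (hθ1 z)),
          abs_of_nonneg (h0 i z)] at h2
        have h3 := mul_le_of_le_one_right (abs_nonneg (fderiv ℝ (φ i) z v))
          (by linarith [hσ0 z] : 1 - ∑ c ∈ X, θ c z ≤ 1)
        have h4 := mul_le_of_le_one_left (abs_nonneg (∑ c ∈ X, fderiv ℝ (θ c) z v)) (h1 i z)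
        have h5 : 0 ≤ ((X.filter (φ · z ≠ 0)).card : ℝ) * (B * ‖v‖) := by positivity
        have h6 : (((X.filter (φ · z ≠ 0)).card : ℝ) + 1) ^ 2 * (B * ‖v‖)
          = ((X.filter (φ · z ≠ 0)).card : ℝ) ^ 2 * (B * ‖v‖)
            + 2 * (((X.filter (φ · z ≠ 0)).card : ℝ) * (B * ‖v‖)) + B * ‖v‖ := by ring
        rw [h6]
        linarith [hB i z v, hθs z v, hθt z v]

end Partition

/-- A compact set has a finite separated net. -/
theorem exists_finset_separated_net {H : Type*} [NormedAddCommGroup H] {E : Set H}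
    (hE : IsCompact E) {ρ : ℝ} (hρ : 0 < ρ) : ∃ X : Finset H, (∀ c ∈ X, c ∈ E) ∧
      (∀ c ∈ X, ∀ c' ∈ X, c ≠ c' → ρ ≤ ‖c - c'‖) ∧ ∀ e ∈ E, ∃ c ∈ X, ‖e - c‖ ≤ ρ := by
  lift ρ to NNReal using hρ.le
  have hρ' : ρ / 2 ≠ 0 := (half_pos (NNReal.coe_pos.1 hρ)).ne'
  obtain ⟨N, -, hNf, hN⟩ := exists_finite_isCover_of_isCompact hρ' hE
  have hfin : packingNumber ρ E ≠ ⊤ := by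
    have h1 := packingNumber_two_mul_le_externalCoveringNumber (ρ / 2) E
    rw [mul_div_cancel₀ _ two_ne_zero] at h1
    exact ((h1.trans (hN.externalCoveringNumber_le_encard)).trans_lt hNf.encard_lt_top).ne
  have hXf : (maximalSeparatedSet ρ E).Finite := by
    rw [← Set.encard_lt_top_iff, encard_maximalSeparatedSet hfin]
    exact hfin.lt_top
  refine ⟨hXf.toFinset, fun c hc => maximalSeparatedSet_subset (hXf.mem_toFinset.1 hc),
    fun c hc c' hc' hne => ?_, fun e he => ?_⟩
  · have h : (ρ : ENNReal) < edist c c' := isSeparated_maximalSeparatedSet (hXf.mem_toFinset.1 hc)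
      (hXf.mem_toFinset.1 hc') hne
    rw [edist_nndist] at h
    rw [← dist_eq_norm, ← coe_nndist]
    exact_mod_cast h.le
  · obtain ⟨c, hc, h⟩ := isCover_maximalSeparatedSet hfin he
    refine ⟨c, hXf.mem_toFinset.2 hc, ?_⟩
    have h' : edist e c ≤ ρ := h
    rw [edist_nndist] at h'
    rw [← dist_eq_norm, ← coe_nndist]
    exact_mod_cast h'

section Net

variable {H : Type*} [NormedAddCommGroup H]

theorem bump_eq_zero {χ : ℝ → ℝ} {B : ℝ} (hχ : IsCutoff χ B) {c z : H} {ρ : ℝ} (hρ : 0 < ρ)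
    (h : ρ ≤ ‖z - c‖) : χ ((ρ ^ 2)⁻¹ * ‖z - c‖ ^ 2) = 0 := by
  refine hχ.eq_zero _ ((le_inv_mul_iff₀ (by positivity)).2 ?_)
  rw [mul_one]
  exact pow_le_pow_left₀ hρ.le h 2

variable [InnerProductSpace ℝ H]

theorem hasFDerivAt_bump {χ : ℝ → ℝ} {B : ℝ} (hχ : IsCutoff χ B) (c z : H) (ρ : ℝ) :
    HasFDerivAt (fun z => χ ((ρ ^ 2)⁻¹ * ‖z - c‖ ^ 2))
      (deriv χ ((ρ ^ 2)⁻¹ * ‖z - c‖ ^ 2) • ((ρ ^ 2)⁻¹ • (2 • innerSL ℝ (z - c)))) z := by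
  have h1 := ((hasFDerivAt_id (𝕜 := ℝ) z).sub_const c).norm_sq
  have h2 := h1.const_mul ((ρ ^ 2)⁻¹)
  have h3 := (hχ.diff ((ρ ^ 2)⁻¹ * ‖z - c‖ ^ 2)).hasDerivAt.comp_hasFDerivAt z h2
  exact h3

theorem abs_fderiv_bump_le {χ : ℝ → ℝ} {B : ℝ} (hχ : IsCutoff χ B) (c z v : H) {ρ : ℝ}
    (hρ : 0 < ρ) :
    |fderiv ℝ (fun z => χ ((ρ ^ 2)⁻¹ * ‖z - c‖ ^ 2)) z v| ≤ 2 * B / ρ * ‖v‖ := by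
  have hB : 0 ≤ B := (abs_nonneg _).trans (hχ.deriv_le 0)
  rcases le_or_gt ρ ‖z - c‖ with h | h
  · have h0 : fderiv ℝ (fun z => χ ((ρ ^ 2)⁻¹ * ‖z - c‖ ^ 2)) z = 0 :=
      IsLocalMin.fderiv_eq_zero (Filter.Eventually.of_forall fun y => by
        beta_reduce
        rw [bump_eq_zero hχ hρ h]
        exact hχ.nonneg _)
    rw [h0]
    simp only [zero_apply, abs_zero]
    positivity
  · rw [(hasFDerivAt_bump hχ c z ρ).fderiv]
    have h1 : |inner ℝ (z - c) v| ≤ ρ * ‖v‖ :=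
      (abs_real_inner_le_norm _ _).trans (mul_le_mul_of_nonneg_right h.le (norm_nonneg _))
    have h2 : |deriv χ ((ρ ^ 2)⁻¹ * ‖z - c‖ ^ 2)| * ((ρ ^ 2)⁻¹ * (2 * |inner ℝ (z - c) v|))
        ≤ B * ((ρ ^ 2)⁻¹ * (2 * (ρ * ‖v‖))) :=
      mul_le_mul (hχ.deriv_le _) (by gcongr) (by positivity) hB
    have h3 : B * ((ρ ^ 2)⁻¹ * (2 * (ρ * ‖v‖))) = 2 * B / ρ * ‖v‖ := by field_simp
    rw [← h3]
    simpa [abs_mul, -map_sub, inner_sub_left] using h2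

variable [FiniteDimensional ℝ H]

theorem card_filter_le_of_separated {X : Finset H} {ρ : ℝ} (hρ : 0 < ρ)
    (hsep : ∀ c ∈ X, ∀ c' ∈ X, c ≠ c' → ρ ≤ ‖c - c'‖) (z : H) {Y : Finset H} (hYX : Y ⊆ X)
    (hY : ∀ c ∈ Y, ‖z - c‖ ≤ 2 * ρ) : Y.card ≤ 5 ^ Module.finrank ℝ H := by
  classical
  have hinj : Function.Injective fun c : H => ρ⁻¹ • (c - z) := fun c c' h => by
    simpa [hρ.ne'] using h
  rw [← Finset.card_image_of_injective Y hinj]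
  refine Besicovitch.card_le_of_separated _ (fun x hx => ?_) fun x hx y hy hxy => ?_
  · obtain ⟨c, hc, rfl⟩ := Finset.mem_image.1 hx
    rw [norm_smul, norm_inv, Real.norm_of_nonneg hρ.le, norm_sub_rev, inv_mul_le_iff₀ hρ]
    linarith [hY c hc]
  · obtain ⟨c, hc, rfl⟩ := Finset.mem_image.1 hx
    obtain ⟨c', hc', rfl⟩ := Finset.mem_image.1 hy
    rw [← smul_sub, norm_smul, norm_inv, Real.norm_of_nonneg hρ.le, sub_sub_sub_cancel_right,
      le_inv_mul_iff₀ hρ, mul_one]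
    exact hsep c (hYX hc) c' (hYX hc') fun h => hxy (by rw [h])

/-- At every scale a compact set has a net with a subordinate partition of unity. -/
theorem exists_net_partition {χ : ℝ → ℝ} {B : ℝ} (hχ : IsCutoff χ B) {E : Set H}
    (hE : IsCompact E) {r : ℝ} (hr : 0 < r) :
    ∃ (X : Finset H) (θ : H → H → ℝ), (∀ c ∈ X, c ∈ E) ∧ (∀ c, Differentiable ℝ (θ c)) ∧
      (∀ c z, 0 ≤ θ c z) ∧ (∀ z, ∑ c ∈ X, θ c z ≤ 1) ∧
      (∀ z, ∀ e ∈ E, ‖z - e‖ ≤ 10 * r → ∑ c ∈ X, θ c z = 1) ∧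
      (∀ z, ∀ c ∈ X, θ c z ≠ 0 → ‖z - c‖ ≤ 40 * r) ∧
      ∀ z v, ∑ c ∈ X, |fderiv ℝ (θ c) z v| ≤ 25 ^ Module.finrank ℝ H * B / r * ‖v‖ := by
  classical
  have hB : 0 ≤ B := (abs_nonneg _).trans (hχ.deriv_le 0)
  have hρ : 0 < 40 * r := by positivity
  obtain ⟨X, hXE, hsep, hcov⟩ := exists_finset_separated_net hE (by positivity : 0 < 20 * r)
  set φ : H → H → ℝ := fun c z => χ (((40 * r) ^ 2)⁻¹ * ‖z - c‖ ^ 2) with hφ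
  obtain ⟨θ, hθd, hθ0, hθφ, hθ1, hθeq, -, hθt⟩ := exists_partition_of_bumps φ
    (fun c z => (hasFDerivAt_bump hχ c z _).differentiableAt) (fun c z => hχ.nonneg _)
    (fun c z => hχ.le_one _) (by positivity : 0 ≤ 2 * B / (40 * r))
    (fun c z v => abs_fderiv_bump_le hχ c z v hρ) X
  have hsupp : ∀ c z, φ c z ≠ 0 → ‖z - c‖ ≤ 40 * r := fun c z h => by
    by_contra! h'
    exact h (bump_eq_zero hχ hρ h'.le)
  refine ⟨X, θ, hXE, hθd, hθ0, hθ1, fun z e he hze => ?_,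
    fun z c _ h => hsupp c z (hθφ c z h), fun z v => (hθt z v).trans ?_⟩
  · obtain ⟨c, hc, hec⟩ := hcov e he
    refine hθeq z c hc (hχ.eq_one _ ((inv_mul_le_iff₀ (by positivity)).2 ?_))
    have h1 : ‖z - c‖ ≤ 30 * r := by
      linarith [norm_sub_le_norm_sub_add_norm_sub z e c]
    have h2 := pow_le_pow_left₀ (norm_nonneg _) h1 2
    linarith
  · have h1 := card_filter_le_of_separated (by positivity) hsep z
      (Finset.filter_subset (φ · z ≠ 0) X)
      (fun c hc => by linarith [hsupp c z (Finset.mem_filter.1 hc).2])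
    have h2 : ((X.filter (φ · z ≠ 0)).card : ℝ) ^ 2 ≤ 25 ^ Module.finrank ℝ H := by
      have h3 : ((X.filter (φ · z ≠ 0)).card : ℝ) ≤ 5 ^ Module.finrank ℝ H := by exact_mod_cast h1
      refine (pow_le_pow_left₀ (by positivity) h3 2).trans_eq ?_
      rw [← pow_mul, mul_comm, pow_mul]
      norm_num
    have h3 : 2 * B / (40 * r) ≤ B / r := by
      rw [div_le_div_iff₀ hρ hr]
      nlinarith [mul_nonneg hB hr.le]
    calc ((X.filter (φ · z ≠ 0)).card : ℝ) ^ 2 * (2 * B / (40 * r) * ‖v‖)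
        ≤ 25 ^ Module.finrank ℝ H * (B / r * ‖v‖) := by gcongr
      _ = _ := by ring

end Net

section Approximation

variable {H : Type*} [NormedAddCommGroup H] [InnerProductSpace ℝ H]

/-- Near `x`, the points of `x + L` are `η`-close to `E`. -/
def Fills (E : Set H) (x : H) (L : Submodule ℝ H) (ρ η : ℝ) : Prop :=
  ∀ v ∈ L, ‖v‖ ≤ ρ → ∃ y ∈ E, ‖y - (x + v)‖ ≤ η

variable {E : Set H} {x x' : H} {L L' : Submodule ℝ H} {ρ η δ δ' : ℝ}

theorem Fills.mono {η' : ℝ} (h : Fills E x L ρ η) (hη : η ≤ η') : Fills E x L ρ η' :=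
  fun v hv hvρ => (h v hv hvρ).imp fun _ hy => ⟨hy.1, hy.2.trans hη⟩

variable [FiniteDimensional ℝ H]

/-- Near `x`, the points of `E` are `δ`-close to `x + L`. -/
def Fits (E : Set H) (x : H) (L : Submodule ℝ H) (ρ δ : ℝ) : Prop :=
  ∀ y ∈ E, ‖y - x‖ ≤ 2 * ρ → ‖perp L (y - x)‖ ≤ δ * ρ

theorem Fills.norm_perp_le (hρ : 0 < ρ) (h : Fills E x L ρ (ρ / 3)) (hL : Fits E x L ρ δ)
    (hL' : Fits E x L' ρ δ') (hδ : 0 ≤ δ) (hδ' : 0 ≤ δ') (z : H) :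
    ‖perp L' (L.starProjection z)‖ ≤ 3 / 2 * (δ + δ') * ‖z‖ := by
  set T : H →L[ℝ] H := (perp L').comp L.starProjection with hT
  have key : ‖T‖ ≤ δ + δ' + ‖T‖ / 3 := by
    refine T.opNorm_le_bound (by positivity) fun z => ?_
    set u := L.starProjection z with hu
    have huz : ‖u‖ ≤ ‖z‖ := L.norm_starProjection_apply_le z
    have hTz : T z = perp L' u := rfl
    rcases eq_or_ne u 0 with h0 | h0
    · rw [hTz, h0, map_zero, norm_zero]; positivity
    have hu0 : 0 < ‖u‖ := norm_pos_iff.2 h0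
    set v := (ρ / ‖u‖) • u with hv
    have hvL : v ∈ L := L.smul_mem _ (L.starProjection_apply_mem z)
    have hvn : ‖v‖ = ρ := by
      rw [hv, norm_smul, Real.norm_of_nonneg (by positivity), div_mul_cancel₀ _ hu0.ne']
    obtain ⟨y, hyE, hy⟩ := h v hvL hvn.le
    have hyx : ‖y - x‖ ≤ 2 * ρ := by
      have h1 : y - x = (y - (x + v)) + v := by abel
      rw [h1]
      linarith [norm_add_le (y - (x + v)) v]
    set w := y - (x + v) with hw
    have h1 : perp L w = perp L (y - x) := by
      have h2 : w = y - x - v := by rw [hw]; abel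
      rw [h2, map_sub, perp_eq_zero_of_mem hvL, sub_zero]
    have h2 : perp L' v = perp L' (y - x) - perp L' (perp L w) - T w := by
      have h3 : v = y - x - w := by rw [hw]; abel
      conv_lhs => rw [h3, map_sub]
      rw [sub_sub, hT, ContinuousLinearMap.comp_apply, ← map_add, perp_apply L w, sub_add_cancel]
    have h3 : ‖perp L' v‖ ≤ (δ + δ' + ‖T‖ / 3) * ρ := by
      have h4 := norm_sub_le (perp L' (y - x) - perp L' (perp L w)) (T w)
      have h5 := norm_sub_le (perp L' (y - x)) (perp L' (perp L w))
      have h6 := _root_.norm_perp_le L' (perp L w)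
      rw [h1] at h6
      have h7 := (T.le_opNorm w).trans (mul_le_mul_of_nonneg_left hy (norm_nonneg T))
      rw [h2]
      rw [h1] at h4 h5 ⊢
      linarith [hL y hyE hyx, hL' y hyE hyx]
    have h4 : ‖perp L' v‖ = ρ / ‖u‖ * ‖perp L' u‖ := by
      rw [hv, map_smul, norm_smul, Real.norm_of_nonneg (by positivity)]
    rw [h4, div_mul_eq_mul_div, div_le_iff₀ hu0] at h3
    have h5 : ‖perp L' u‖ ≤ (δ + δ' + ‖T‖ / 3) * ‖u‖ := by
      refine le_of_mul_le_mul_left ?_ hρ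
      linarith
    rw [hTz]
    exact h5.trans (mul_le_mul_of_nonneg_left huz (by positivity))
  refine (T.le_opNorm z).trans (mul_le_mul_of_nonneg_right ?_ (norm_nonneg z))
  linarith

theorem norm_starProjection_perp_le {κ : ℝ} (hκ : 0 ≤ κ)
    (h : ∀ z, ‖perp L (L'.starProjection z)‖ ≤ κ * ‖z‖) (z : H) :
    ‖L'.starProjection (perp L z)‖ ≤ κ * ‖z‖ := by
  set u := L'.starProjection (perp L z) with hu
  have h1 : ‖u‖ ^ 2 ≤ κ * ‖z‖ * ‖u‖ := by
    have h2 : inner ℝ u u = inner ℝ (perp L (L'.starProjection u)) z := by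
      rw [perp_eq_starProjection_orthogonal]
      rw [Lᗮ.inner_starProjection_left_eq_right, L'.inner_starProjection_left_eq_right,
        ← perp_eq_starProjection_orthogonal, real_inner_comm]
    rw [← real_inner_self_eq_norm_sq, h2]
    refine (real_inner_le_norm _ _).trans ?_
    nlinarith [h u, norm_nonneg z]
  rcases (norm_nonneg u).eq_or_lt with h0 | h0
  · rw [← h0]; positivity
  · nlinarith

/-- Two planes that both approximate `E` well, from both sides, are close to each other. -/
theorem norm_starProjection_sub_le (hρ : 0 < ρ) {δ₁ δ₂ δ₁' δ₂' : ℝ}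
    (h : Fills E x L ρ (ρ / 3)) (h₁ : Fits E x L ρ δ₁) (h₂ : Fits E x L' ρ δ₂)
    (h' : Fills E x' L' ρ (ρ / 3)) (h₁' : Fits E x' L' ρ δ₁') (h₂' : Fits E x' L ρ δ₂')
    (hδ₁ : 0 ≤ δ₁) (hδ₂ : 0 ≤ δ₂) (hδ₁' : 0 ≤ δ₁') (hδ₂' : 0 ≤ δ₂') (z : H) :
    ‖L.starProjection z - L'.starProjection z‖ ≤ 3 / 2 * (δ₁ + δ₂ + δ₁' + δ₂') * ‖z‖ := by
  have h3 := h.norm_perp_le hρ h₁ h₂ hδ₁ hδ₂ z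
  have h4 := norm_starProjection_perp_le (by positivity) (h'.norm_perp_le hρ h₁' h₂' hδ₁' hδ₂') z
  have h5 : L.starProjection z - L'.starProjection z
      = perp L' (L.starProjection z) - L'.starProjection (perp L z) := by
    rw [perp_apply, perp_apply, map_sub]; abel
  rw [h5]
  refine (norm_sub_le _ _).trans ?_
  linarith

/-- A plane of the same dimension that is close to a plane filled by `E` is filled by `E`. -/
theorem Fills.of_close {κ : ℝ} (h : Fills E x L (2 * ρ) η) (hκ : κ ≤ 1 / 2) (hκ0 : 0 ≤ κ)
    (hdim : Module.finrank ℝ L = Module.finrank ℝ L')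
    (hL : ∀ z, ‖perp L' (L.starProjection z)‖ ≤ κ * ‖z‖) :
    Fills E x L' ρ (η + 2 * κ * ρ) := by
  have hL2 : ∀ v ∈ L, ‖perp L' v‖ ≤ κ * ‖v‖ := fun v hv => by
    have := hL v
    rwa [Submodule.starProjection_eq_self_iff.2 hv] at this
  have hle : ∀ v ∈ L, ‖v‖ ≤ 2 * ‖L'.starProjection v‖ := fun v hv => by
    have h1 := hL2 v hv
    rw [perp_apply] at h1
    nlinarith [norm_le_norm_add_norm_sub' v (L'.starProjection v), norm_nonneg v]
  set f : L →ₗ[ℝ] L' := (L'.orthogonalProjectionOnto : H →ₗ[ℝ] L').comp L.subtype with hf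
  have hfv : ∀ v : L, (f v : H) = L'.starProjection v := fun v => rfl
  have hinj : Function.Injective f := by
    rw [← LinearMap.ker_eq_bot, LinearMap.ker_eq_bot']
    intro v hv
    have h1 := hle v v.2
    rw [← hfv, hv] at h1
    have h2 : ‖(v : H)‖ ≤ 0 := by simpa using h1
    exact Subtype.ext (norm_le_zero_iff.1 h2)
  intro u hu huρ
  obtain ⟨v, hv⟩ := (LinearMap.injective_iff_surjective_of_finrank_eq_finrank hdim).1 hinj ⟨u, hu⟩
  have hvu : L'.starProjection v = u := by rw [← hfv, hv]
  have h1 := hle v v.2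
  rw [hvu] at h1
  obtain ⟨y, hyE, hy⟩ := h v v.2 (by linarith)
  refine ⟨y, hyE, ?_⟩
  have h2 : y - (x + u) = (y - (x + v)) + perp L' v := by rw [perp_apply, hvu]; abel
  rw [h2]
  refine (norm_add_le _ _).trans (add_le_add hy ((hL2 v v.2).trans ?_))
  nlinarith

end Approximation

section Planes

variable {n d : ℕ} {E : Set (V n)} {x : V n} {r : ℝ}

theorem infDist_eq_norm_perp {Q : AffineSubspace ℝ (V n)} (hx : x ∈ Q) (y : V n) :
    infDist y (Q : Set (V n)) = ‖perp Q.direction (y - x)‖ := by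
  apply le_antisymm
  · have hmem : Q.direction.starProjection (y - x) + x ∈ Q :=
      AffineSubspace.vadd_mem_of_mem_direction (Q.direction.starProjection_apply_mem _) hx
    refine (infDist_le_dist_of_mem hmem).trans_eq ?_
    rw [dist_eq_norm, perp_apply]
    congr 1
    abel
  · refine (le_infDist ⟨x, hx⟩).2 fun p hp => ?_
    have h1 : p - x ∈ Q.direction := AffineSubspace.vsub_mem_direction hp hx
    have h2 : y - x = (y - p) + (p - x) := by abel
    rw [h2, map_add, perp_eq_zero_of_mem h1, add_zero, dist_eq_norm]
    exact norm_perp_le _ _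

theorem IsAffinePlane.exists_direction {P : Set (V n)} (hP : IsAffinePlane n d P) (hx : x ∈ P) :
    ∃ L : Submodule ℝ (V n), Module.finrank ℝ L = d ∧
      (∀ y, infDist y P = ‖perp L (y - x)‖) ∧ ∀ y, y ∈ P ↔ y - x ∈ L := by
  obtain ⟨Q, rfl, hQ, -⟩ := hP
  exact ⟨Q.direction, hQ, infDist_eq_norm_perp hx,
    fun y => (AffineSubspace.vsub_right_mem_direction_iff_mem hx y).symm⟩

theorem exists_isAffinePlane {L : Submodule ℝ (V n)} (hL : Module.finrank ℝ L = d) (x : V n) :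
    ∃ P : Set (V n), IsAffinePlane n d P ∧ x ∈ P ∧ ∀ y, infDist y P = ‖perp L (y - x)‖ := by
  refine ⟨AffineSubspace.mk' x L, ⟨_, rfl, by rw [AffineSubspace.direction_mk', hL],
    ⟨x, AffineSubspace.self_mem_mk' x L⟩⟩, AffineSubspace.self_mem_mk' x L, fun y => ?_⟩
  rw [infDist_eq_norm_perp (AffineSubspace.self_mem_mk' x L), AffineSubspace.direction_mk']

theorem iSup_infDist_nonneg (P : Set (V n)) : 0 ≤ ⨆ y ∈ E ∩ ball x r, infDist y P :=
  Real.iSup_nonneg fun _ => Real.iSup_nonneg fun _ => infDist_nonneg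

theorem infDist_le_iSup {P : Set (V n)} (hx : x ∈ P) (hr : 0 ≤ r) {y : V n} (hy : y ∈ E ∩ ball x r) :
    infDist y P ≤ ⨆ y ∈ E ∩ ball x r, infDist y P := by
  have hbd : BddAbove (range fun y => ⨆ _ : y ∈ E ∩ ball x r, infDist y P) := by
    refine ⟨r, ?_⟩
    rintro _ ⟨y, rfl⟩
    exact Real.iSup_le (fun h => (infDist_le_dist_of_mem hx).trans (mem_ball.1 h.2).le) hr
  refine le_trans ?_ (le_ciSup hbd y)
  rw [ciSup_pos hy]

theorem betaInf_nonneg (hr : 0 ≤ r) : 0 ≤ betaInf n d E x r := by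
  refine mul_nonneg (inv_nonneg.2 hr) (Real.sInf_nonneg ?_)
  rintro _ ⟨P, -, -, rfl⟩
  exact iSup_infDist_nonneg P

theorem betaInf_le (hr : 0 < r) {L : Submodule ℝ (V n)} (hL : Module.finrank ℝ L = d) {s : ℝ}
    (hs : 0 ≤ s) (h : ∀ y ∈ E, ‖y - x‖ < r → ‖perp L (y - x)‖ ≤ s * r) :
    betaInf n d E x r ≤ s := by
  obtain ⟨P, hP, hxP, hPL⟩ := exists_isAffinePlane hL x
  rw [betaInf, inv_mul_le_iff₀ hr, mul_comm]
  have hbd : BddBelow { t : ℝ | ∃ P : Set (V n), IsAffinePlane n d P ∧ x ∈ P ∧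
      t = ⨆ y ∈ E ∩ ball x r, infDist y P } := by
    refine ⟨0, ?_⟩
    rintro _ ⟨P, -, -, rfl⟩
    exact iSup_infDist_nonneg P
  refine (csInf_le hbd ⟨P, hP, hxP, rfl⟩).trans ?_
  refine Real.iSup_le (fun y => Real.iSup_le (fun hy => ?_) (by positivity)) (by positivity)
  rw [hPL]
  exact h y hy.1 (mem_ball_iff_norm.1 hy.2)

theorem exists_near_betaInf (hr : 0 < r) {L₀ : Submodule ℝ (V n)} (hL₀ : Module.finrank ℝ L₀ = d)
    {s : ℝ} (hs : 0 < s) : ∃ L : Submodule ℝ (V n), Module.finrank ℝ L = d ∧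
      ∀ y ∈ E, ‖y - x‖ < r → ‖perp L (y - x)‖ ≤ (betaInf n d E x r + s) * r := by
  obtain ⟨P₀, hP₀, hxP₀, -⟩ := exists_isAffinePlane hL₀ x
  set S := { t : ℝ | ∃ P : Set (V n), IsAffinePlane n d P ∧ x ∈ P ∧
    t = ⨆ y ∈ E ∩ ball x r, infDist y P } with hS
  have hne : S.Nonempty := ⟨_, P₀, hP₀, hxP₀, rfl⟩
  have hlt : sInf S < (betaInf n d E x r + s) * r := by
    rw [betaInf, ← hS, add_mul, mul_comm r⁻¹, inv_mul_cancel_right₀ hr.ne']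
    linarith [mul_pos hs hr]
  obtain ⟨_, ⟨P, hP, hxP, rfl⟩, h⟩ := exists_lt_of_csInf_lt hne hlt
  obtain ⟨L, hL, hPL, -⟩ := hP.exists_direction hxP
  refine ⟨L, hL, fun y hy hyx => ?_⟩
  rw [← hPL]
  exact (infDist_le_iSup hxP hr.le ⟨hy, mem_ball_iff_norm.2 hyx⟩).trans h.le

end Planes

section Smoothing

/-- A sequence dominating `f` that decays at most geometrically. -/
def slowMajorant (c : ℝ) (f : ℕ → ℝ) : ℕ → ℝ
  | 0 => c + f 0
  | k + 1 => slowMajorant c f k / 2 + f (k + 1)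

variable {c : ℝ} {f : ℕ → ℝ}

theorem slowMajorant_nonneg (hc : 0 ≤ c) (hf : ∀ k, 0 ≤ f k) (k : ℕ) :
    0 ≤ slowMajorant c f k := by
  induction k with
  | zero => exact add_nonneg hc (hf 0)
  | succ k ih => exact add_nonneg (by linarith) (hf _)

theorem le_slowMajorant (hc : 0 ≤ c) (hf : ∀ k, 0 ≤ f k) (k : ℕ) : f k ≤ slowMajorant c f k := by
  cases k with
  | zero => exact le_add_of_nonneg_left hc
  | succ k => exact le_add_of_nonneg_left (by linarith [slowMajorant_nonneg hc hf k])

theorem slowMajorant_le_two_mul (hf : ∀ k, 0 ≤ f k) (k : ℕ) :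
    slowMajorant c f k ≤ 2 * slowMajorant c f (k + 1) := by
  rw [slowMajorant]
  linarith [hf (k + 1)]

theorem slowMajorant_le {m : ℝ} (hm : ∀ k, f k ≤ m) (hmc : m ≤ c) (k : ℕ) :
    slowMajorant c f k ≤ c + m := by
  induction k with
  | zero => exact add_le_add_right (hm 0) c
  | succ k ih => rw [slowMajorant]; linarith [hm (k + 1)]

theorem sum_slowMajorant_sq_le (N : ℕ) :
    ∑ k ∈ Finset.range N, slowMajorant c f k ^ 2
      ≤ 2 * slowMajorant c f 0 ^ 2 + 4 * ∑ k ∈ Finset.range N, f (k + 1) ^ 2 := by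
  suffices h : ∑ k ∈ Finset.range N, slowMajorant c f k ^ 2 + 2 * slowMajorant c f N ^ 2
      ≤ 2 * slowMajorant c f 0 ^ 2 + 4 * ∑ k ∈ Finset.range N, f (k + 1) ^ 2 by
    linarith [sq_nonneg (slowMajorant c f N)]
  induction N with
  | zero => simp
  | succ N ih =>
    have hN : slowMajorant c f (N + 1) = slowMajorant c f N / 2 + f (N + 1) := rfl
    rw [Finset.sum_range_succ, Finset.sum_range_succ, hN]
    nlinarith [sq_nonneg (slowMajorant c f N / 2 - f (N + 1))]

theorem sum_range_shift_le {g : ℕ → ℝ} {A : ℝ} (hg : ∀ k, 0 ≤ g k)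
    (hA : ∀ N, ∑ k ∈ Finset.range N, g k ≤ A) (i N : ℕ) :
    ∑ k ∈ Finset.range N, g (i + k) ≤ A := by
  refine le_trans ?_ (hA (i + N))
  rw [Finset.sum_range_add]
  exact le_add_of_nonneg_left (Finset.sum_nonneg fun k _ => hg k)

end Smoothing

/-- The scale `10 ^ (-j)`. -/
def scale (j : ℕ) : ℝ := (10 : ℝ) ^ (-(j : ℤ))

theorem scale_eq (j : ℕ) : scale j = 1 / 10 ^ j := by
  rw [scale, zpow_neg, zpow_natCast, one_div]

theorem scale_pos (j : ℕ) : 0 < scale j := by rw [scale_eq]; positivity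

theorem scale_succ (j : ℕ) : scale (j + 1) = scale j / 10 := by
  rw [scale_eq, scale_eq, pow_succ, div_div]

theorem scale_le_one (j : ℕ) : scale j ≤ 1 := by
  rw [scale_eq]
  exact div_le_one_of_le₀ (one_le_pow₀ (by norm_num)) (by positivity)

theorem scale_succ_eq_mul (k : ℕ) : scale (k + 1) = 1000 * (1 / 10 ^ 4 / 10 ^ k) := by
  rw [scale_succ, scale_eq]; ring

section Reifenberg

variable {n d : ℕ} {E : Set (V n)} {P : V n → ℝ → Set (V n)} {ε : ℝ}

/-- `E` is bilaterally `ε`-close to the `d`-planes `P x r` in `B(0,10)`. -/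
def IsReifenbergFlat (n d : ℕ) (E : Set (V n)) (P : V n → ℝ → Set (V n)) (ε : ℝ) : Prop :=
  ∀ x ∈ E ∩ ball (0 : V n) 10, ∀ r : ℝ, 0 < r → r ≤ 10 →
    IsAffinePlane n d (P x r) ∧ x ∈ P x r ∧
    (∀ y ∈ E ∩ ball x r, infDist y (P x r) ≤ ε * r) ∧
    (∀ y ∈ P x r ∩ ball x r, infDist y E ≤ ε * r)

theorem IsReifenbergFlat.exists_direction (h : IsReifenbergFlat n d E P ε) (hE : IsClosed E)
    {x : V n} (hx : x ∈ E ∩ ball (0 : V n) 10) {r : ℝ} (hr : 0 < r) (hr' : r ≤ 10) :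
    ∃ L : Submodule ℝ (V n), Module.finrank ℝ L = d ∧ (∀ y, y ∈ P x r ↔ y - x ∈ L) ∧
      (∀ y ∈ E, ‖y - x‖ < r → ‖perp L (y - x)‖ ≤ ε * r) ∧
      ∀ v ∈ L, ‖v‖ < r → ∃ y ∈ E, ‖y - (x + v)‖ ≤ ε * r := by
  obtain ⟨hP, hxP, h1, h2⟩ := h x hx r hr hr'
  obtain ⟨L, hL, hPL, hmem⟩ := hP.exists_direction hxP
  refine ⟨L, hL, hmem, fun y hy hyx => ?_, fun v hv hvr => ?_⟩
  · rw [← hPL]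
    exact h1 y ⟨hy, mem_ball_iff_norm.2 hyx⟩
  · obtain ⟨y, hy, hyd⟩ := hE.exists_infDist_eq_dist ⟨x, hx.1⟩ (x + v)
    refine ⟨y, hy, ?_⟩
    rw [← dist_eq_norm, dist_comm, ← hyd]
    exact h2 _ ⟨(hmem _).2 (by simpa using hv), mem_ball_iff_norm.2 (by simpa using hvr)⟩

/-- The Jones number at scale `10 ^ (-j)`, with a summable positive margin. -/
def jonesBound (n d : ℕ) (E : Set (V n)) (ε : ℝ) (e : V n) (j : ℕ) : ℝ :=
  betaInf n d E e (scale j) + ε * (1 / 2) ^ j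

theorem jonesBound_nonneg (hε : 0 ≤ ε) (e : V n) (j : ℕ) : 0 ≤ jonesBound n d E ε e j :=
  add_nonneg (betaInf_nonneg (scale_pos j).le) (by positivity)

theorem IsReifenbergFlat.jonesBound_le (h : IsReifenbergFlat n d E P ε) (hE : IsClosed E)
    (hε : 0 ≤ ε) {e : V n} (he : e ∈ E ∩ ball (0 : V n) 10) (j : ℕ) :
    jonesBound n d E ε e j ≤ 2 * ε := by
  obtain ⟨L, hL, -, h1, -⟩ :=
    h.exists_direction hE he (scale_pos j) ((scale_le_one j).trans (by norm_num))
  have h2 := betaInf_le (scale_pos j) hL hε h1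
  have h3 : ε * (1 / 2) ^ j ≤ ε :=
    mul_le_of_le_one_right hε (pow_le_one₀ (by norm_num) (by norm_num))
  rw [jonesBound]
  linarith

theorem sum_jonesBound_sq_le (hε : 0 ≤ ε) (hε' : ε ≤ 1) {M : ℝ} {e : V n}
    (hM : ∀ N : ℕ, ∑ k ∈ Finset.range N, betaInf n d E e (scale k) ^ 2 ≤ M) (N : ℕ) :
    ∑ k ∈ Finset.range N, jonesBound n d E ε e k ^ 2 ≤ 2 * M + 4 := by
  have h1 : ∀ k, jonesBound n d E ε e k ^ 2
      ≤ 2 * betaInf n d E e (scale k) ^ 2 + 2 * (1 / 2) ^ k := fun k => by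
    have h2 : ε * (1 / 2) ^ k ≤ (1 / 2) ^ k := mul_le_of_le_one_left (by positivity) hε'
    have h3 : ε * (1 / 2) ^ k ≤ 1 := h2.trans (pow_le_one₀ (by norm_num) (by norm_num))
    have h4 : 0 ≤ ε * (1 / 2) ^ k := by positivity
    rw [jonesBound]
    nlinarith [sq_nonneg (betaInf n d E e (scale k) - ε * (1 / 2) ^ k)]
  refine (Finset.sum_le_sum fun k _ => h1 k).trans ?_
  rw [Finset.sum_add_distrib, ← Finset.mul_sum, ← Finset.mul_sum]
  linarith [hM N, sum_geometric_two_le N]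

/-- A choice of nearly optimal approximating planes at all points and scales. -/
structure IsPlaneField (n d : ℕ) (E : Set (V n)) (ε : ℝ) (Λ : ℕ → V n → Submodule ℝ (V n)) :
    Prop where
  finrank_eq : ∀ e ∈ E ∩ ball (0 : V n) 10, ∀ j, Module.finrank ℝ (Λ j e) = d
  norm_perp_le : ∀ e ∈ E ∩ ball (0 : V n) 10, ∀ j, ∀ y ∈ E, ‖y - e‖ < scale j →
    ‖perp (Λ j e) (y - e)‖ ≤ jonesBound n d E ε e j * scale j
  fills : ∀ e ∈ E ∩ ball (0 : V n) 10, ∀ j, Fills E e (Λ j e) (scale j / 4) (10 * ε * scale j)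

theorem IsReifenbergFlat.exists_isPlaneField (h : IsReifenbergFlat n d E P ε) (hE : IsClosed E)
    (hε : 0 < ε) (hε' : ε ≤ 1 / 10 ^ 5) : ∃ Λ, IsPlaneField n d E ε Λ := by
  have key : ∀ j, ∀ e : V n, e ∈ E ∩ ball (0 : V n) 10 → ∃ L : Submodule ℝ (V n),
      Module.finrank ℝ L = d ∧ (∀ y ∈ E, ‖y - e‖ < scale j →
        ‖perp L (y - e)‖ ≤ jonesBound n d E ε e j * scale j) ∧
      Fills E e L (scale j / 4) (10 * ε * scale j) := by
    intro j e he
    have ht := scale_pos j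
    obtain ⟨L₀, hL₀, -, h1, h2⟩ :=
      h.exists_direction hE he ht ((scale_le_one j).trans (by norm_num))
    obtain ⟨L, hL, h3⟩ := exists_near_betaInf (E := E) (x := e) ht hL₀
      (by positivity : 0 < ε * (1 / 2) ^ j)
    refine ⟨L, hL, h3, ?_⟩
    have hfits₀ : Fits E e L₀ (scale j / 4) (4 * ε) := fun y hy hye => by
      linarith [h1 y hy (by linarith)]
    have hfits : Fits E e L (scale j / 4) (8 * ε) := fun y hy hye => by
      have h4 := mul_le_mul_of_nonneg_right (h.jonesBound_le hE hε.le he j) ht.le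
      rw [jonesBound] at h4
      linarith [h3 y hy (by linarith)]
    have hfills : Fills E e L₀ (scale j / 4) (scale j / 4 / 3) := fun v hv hvr => by
      obtain ⟨y, hy, hyd⟩ := h2 v hv (by linarith)
      exact ⟨y, hy, hyd.trans (by nlinarith)⟩
    have hfills' : Fills E e L₀ (2 * (scale j / 4)) (ε * scale j) := fun v hv hvr =>
      h2 v hv (by linarith)
    have hclose := hfills.norm_perp_le (by positivity) hfits₀ hfits (by positivity) (by positivity)
    refine (hfills'.of_close (by linarith) (by positivity) (hL₀.trans hL.symm) hclose).mono ?_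
    exact le_of_eq (by ring)
  choose! Λ h1 h2 h3 using key
  exact ⟨Λ, fun e he j => h1 j e he, fun e he j => h2 j e he, fun e he j => h3 j e he⟩

namespace IsPlaneField

variable {Λ : ℕ → V n → Submodule ℝ (V n)} {e c : V n}

theorem norm_perp_sub_le (h : IsPlaneField n d E ε Λ)
    (he : e ∈ E ∩ ball (0 : V n) 10) {y : V n} (hc : c ∈ E) (hy : y ∈ E) {j : ℕ}
    (hce : ‖c - e‖ < scale j) (hye : ‖y - e‖ < scale j) :
    ‖perp (Λ j e) (y - c)‖ ≤ 2 * jonesBound n d E ε e j * scale j := by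
  have h1 : y - c = (y - e) - (c - e) := by abel
  rw [h1, map_sub]
  linarith [norm_sub_le (perp (Λ j e) (y - e)) (perp (Λ j e) (c - e)),
    h.norm_perp_le e he j y hy hye, h.norm_perp_le e he j c hc hce]

theorem jonesBound_le_of_near (h : IsPlaneField n d E ε Λ) (hε : 0 ≤ ε)
    (he : e ∈ E ∩ ball (0 : V n) 10) (hc : c ∈ E) {j : ℕ} (hce : ‖c - e‖ ≤ scale (j + 1) / 10) :
    jonesBound n d E ε c (j + 1) ≤ 21 * jonesBound n d E ε e j := by
  have ht := scale_pos j
  rw [scale_succ] at hce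
  have h0 := jonesBound_nonneg (n := n) (d := d) (E := E) hε e j
  have h1 : betaInf n d E c (scale (j + 1)) ≤ 20 * jonesBound n d E ε e j := by
    refine betaInf_le (scale_pos _) (h.finrank_eq e he j) (by positivity) fun y hy hyc => ?_
    rw [scale_succ] at hyc ⊢
    have h2 : ‖y - e‖ < scale j := by
      linarith [norm_sub_le_norm_sub_add_norm_sub y c e]
    linarith [h.norm_perp_sub_le he hc hy (by linarith) h2]
  have h2 : ε * (1 / 2) ^ (j + 1) ≤ jonesBound n d E ε e j := by
    have h3 := betaInf_nonneg (n := n) (d := d) (E := E) (x := e) ht.le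
    have h4 : 0 ≤ ε * (1 / 2) ^ j := by positivity
    rw [jonesBound, pow_succ]
    linarith
  rw [jonesBound]
  linarith

theorem fits_of_near (h : IsPlaneField n d E ε Λ)
    (he : e ∈ E ∩ ball (0 : V n) 10) (hc : c ∈ E) {j : ℕ} (hce : ‖c - e‖ ≤ scale j / 10) :
    Fits E c (Λ j e) (scale j / 4) (8 * jonesBound n d E ε e j) := fun y hy hyc => by
  have ht := scale_pos j
  have h2 : ‖y - e‖ < scale j := by
    linarith [norm_sub_le_norm_sub_add_norm_sub y c e]
  linarith [h.norm_perp_sub_le he hc hy (by linarith) h2]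

theorem fits (h : IsPlaneField n d E ε Λ)
    (he : e ∈ E ∩ ball (0 : V n) 10) (j : ℕ) :
    Fits E e (Λ j e) (scale j / 4) (8 * jonesBound n d E ε e j) :=
  h.fits_of_near he he.1 (by simpa using (div_pos (scale_pos j) (by norm_num)).le)

theorem fills_third (h : IsPlaneField n d E ε Λ) (hε' : ε ≤ 1 / 10 ^ 5)
    (he : e ∈ E ∩ ball (0 : V n) 10) (j : ℕ) :
    Fills E e (Λ j e) (scale j / 4) (scale j / 4 / 3) :=
  (h.fills e he j).mono (by nlinarith [scale_pos j])

theorem norm_starProjection_sub_le_of_near (h : IsPlaneField n d E ε Λ) (hε : 0 ≤ ε)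
    (hε' : ε ≤ 1 / 10 ^ 5) (he : e ∈ E ∩ ball (0 : V n) 10) (hc : c ∈ E ∩ ball (0 : V n) 10)
    {j : ℕ} (hce : ‖c - e‖ ≤ scale (j + 1) / 10) (x : V n) :
    ‖(Λ (j + 1) c).starProjection x - (Λ (j + 1) e).starProjection x‖
      ≤ (504 * jonesBound n d E ε e j + 24 * jonesBound n d E ε e (j + 1)) * ‖x‖ := by
  have hec : ‖e - c‖ ≤ scale (j + 1) / 10 := by rwa [norm_sub_rev]
  have h0 := fun c i => jonesBound_nonneg (n := n) (d := d) (E := E) hε c i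
  refine (norm_starProjection_sub_le (by linarith [scale_pos (j + 1)])
    (h.fills_third hε' hc (j + 1)) (h.fits hc _) (h.fits_of_near he hc.1 hce)
    (h.fills_third hε' he (j + 1)) (h.fits he _) (h.fits_of_near hc he.1 hec)
    (by linarith [h0 c (j + 1)]) (by linarith [h0 e (j + 1)]) (by linarith [h0 e (j + 1)])
    (by linarith [h0 c (j + 1)]) x).trans ?_
  refine mul_le_mul_of_nonneg_right ?_ (norm_nonneg x)
  linarith [h.jonesBound_le_of_near hε he hc.1 hce]

theorem norm_starProjection_succ_sub_le (h : IsPlaneField n d E ε Λ) (hε : 0 ≤ ε)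
    (hε' : ε ≤ 1 / 10 ^ 5) (he : e ∈ E ∩ ball (0 : V n) 10) (j : ℕ) (x : V n) :
    ‖(Λ (j + 1) e).starProjection x - (Λ j e).starProjection x‖
      ≤ (120 * jonesBound n d E ε e j + 24 * jonesBound n d E ε e (j + 1)) * ‖x‖ := by
  have ht := scale_pos j
  have h0 := fun i => jonesBound_nonneg (n := n) (d := d) (E := E) hε e i
  have hfits : Fits E e (Λ j e) (scale (j + 1) / 4) (40 * jonesBound n d E ε e j) :=
    fun y hy hye => by
      rw [scale_succ] at hye ⊢
      linarith [h.norm_perp_le e he j y hy (by linarith)]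
  have hfills : Fills E e (Λ j e) (scale (j + 1) / 4) (scale (j + 1) / 4 / 3) :=
    fun v hv hvr => by
      rw [scale_succ] at hvr ⊢
      obtain ⟨y, hy, hyd⟩ := h.fills e he j v hv (by linarith)
      exact ⟨y, hy, hyd.trans (by nlinarith)⟩
  refine (norm_starProjection_sub_le (by linarith [scale_pos (j + 1)])
    (h.fills_third hε' he (j + 1)) (h.fits he _) hfits hfills hfits (h.fits he _)
    (by linarith [h0 (j + 1)]) (by linarith [h0 j]) (by linarith [h0 j])
    (by linarith [h0 (j + 1)]) x).trans ?_
  refine mul_le_mul_of_nonneg_right ?_ (norm_nonneg x)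
  linarith

theorem norm_starProjection_sub_base_le (h : IsPlaneField n d E ε Λ) (hε : 0 ≤ ε)
    (hε' : ε ≤ 1 / 10 ^ 5) (he : e ∈ E) (he5 : ‖e‖ ≤ 5) {B : Submodule ℝ (V n)}
    (hB : ∀ y ∈ E, ‖y‖ < 10 → ‖perp B y‖ ≤ 10 * ε)
    (hB' : ∀ z ∈ B, ‖z‖ < 10 → ∃ y ∈ E, ‖y - z‖ ≤ 10 * ε) (x : V n) :
    ‖(Λ 1 e).starProjection x - B.starProjection x‖
      ≤ (2400 * ε + 24 * jonesBound n d E ε e 1) * ‖x‖ := by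
  have hes : e ∈ E ∩ ball (0 : V n) 10 := ⟨he, by rw [mem_ball_zero_iff]; linarith⟩
  have h0 := jonesBound_nonneg (n := n) (d := d) (E := E) hε e 1
  have hs : scale 1 = 1 / 10 := by rw [scale_eq]; norm_num
  have hfits : Fits E e B (scale 1 / 4) (800 * ε) := fun y hy hye => by
    rw [hs] at hye ⊢
    have h1 : ‖y‖ < 10 := by linarith [norm_le_norm_add_norm_sub' y e]
    rw [map_sub]
    linarith [norm_sub_le (perp B y) (perp B e), hB y hy h1, hB e he (by linarith)]
  have hfills : Fills E e B (scale 1 / 4) (scale 1 / 4 / 3) := fun v hv hvr => by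
    rw [hs] at hvr ⊢
    have h1 : ‖B.starProjection e + v‖ < 10 := by
      linarith [norm_add_le (B.starProjection e) v, B.norm_starProjection_apply_le e]
    obtain ⟨y, hy, hyd⟩ := hB' _ (B.add_mem (B.starProjection_apply_mem e) hv) h1
    refine ⟨y, hy, ?_⟩
    have h2 : y - (e + v) = (y - (B.starProjection e + v)) - perp B e := by
      rw [perp_apply]; abel
    rw [h2]
    linarith [norm_sub_le (y - (B.starProjection e + v)) (perp B e), hB e he (by linarith)]
  refine (norm_starProjection_sub_le (by linarith [scale_pos 1])
    (h.fills_third hε' hes 1) (h.fits hes _) hfits hfills hfits (h.fits hes _)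
    (by linarith) (by linarith) (by linarith) (by linarith) x).trans ?_
  refine mul_le_mul_of_nonneg_right ?_ (norm_nonneg x)
  linarith

end IsPlaneField

end Reifenberg

section Assembly

variable {n d : ℕ} {E : Set (V n)} {P : V n → ℝ → Set (V n)} {ε : ℝ}

/-- The oscillation of the approximating planes around `e`, as a function of the scale. -/
def planeOscillation (n d : ℕ) (E : Set (V n)) (ε : ℝ) (e : V n) : ℕ → ℝ :=
  slowMajorant (10 ^ 5 * ε) fun k => 1000 * (jonesBound n d E ε e k +
    jonesBound n d E ε e (k + 1) + jonesBound n d E ε e (k + 2))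

theorem le_planeOscillation (hε : 0 ≤ ε) (e : V n) (k : ℕ) :
    1000 * (jonesBound n d E ε e k + jonesBound n d E ε e (k + 1) + jonesBound n d E ε e (k + 2))
      ≤ planeOscillation n d E ε e k := by
  have h0 := fun i => jonesBound_nonneg (n := n) (d := d) (E := E) hε e i
  exact le_slowMajorant (f := fun k => 1000 * (jonesBound n d E ε e k +
    jonesBound n d E ε e (k + 1) + jonesBound n d E ε e (k + 2))) (by positivity)
    (fun k => by linarith [h0 k, h0 (k + 1), h0 (k + 2)]) k

theorem planeOscillation_zero (e : V n) : planeOscillation n d E ε e 0 = 10 ^ 5 * ε +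
    1000 * (jonesBound n d E ε e 0 + jonesBound n d E ε e 1 + jonesBound n d E ε e 2) := rfl

theorem planeOscillation_nonneg (hε : 0 ≤ ε) (e : V n) (k : ℕ) : 0 ≤ planeOscillation n d E ε e k := by
  have h0 := fun i => jonesBound_nonneg (n := n) (d := d) (E := E) hε e i
  linarith [le_planeOscillation (n := n) (d := d) (E := E) hε e k, h0 k, h0 (k + 1), h0 (k + 2)]

theorem planeOscillation_le (hε : 0 ≤ ε) {e : V n} (h : ∀ j, jonesBound n d E ε e j ≤ 2 * ε) (k : ℕ) :
    planeOscillation n d E ε e k ≤ 2 * 10 ^ 5 * ε := by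
  refine (slowMajorant_le (m := 6000 * ε)
    (fun k => by linarith [h k, h (k + 1), h (k + 2)]) (by linarith) k).trans (by linarith)

theorem sum_planeOscillation_sq_le (hε : 0 ≤ ε) {e : V n} {A : ℝ}
    (hosc : planeOscillation n d E ε e 0 ≤ 1)
    (hA : ∀ N, ∑ k ∈ Finset.range N, jonesBound n d E ε e k ^ 2 ≤ A) (N : ℕ) :
    ∑ k ∈ Finset.range N, planeOscillation n d E ε e k ^ 2 ≤ 2 + 36 * 10 ^ 6 * A := by
  refine (sum_slowMajorant_sq_le N).trans ?_
  have h1 : planeOscillation n d E ε e 0 ^ 2 ≤ 1 := pow_le_one₀ (planeOscillation_nonneg hε e 0) hosc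
  have h2 := fun i => sum_range_shift_le (fun k => sq_nonneg (jonesBound n d E ε e k)) hA i N
  have h3 : ∑ k ∈ Finset.range N, (1000 * (jonesBound n d E ε e (k + 1) +
      jonesBound n d E ε e (k + 1 + 1) + jonesBound n d E ε e (k + 1 + 2))) ^ 2
      ≤ ∑ k ∈ Finset.range N, 3 * 10 ^ 6 * (jonesBound n d E ε e (1 + k) ^ 2 +
        jonesBound n d E ε e (2 + k) ^ 2 + jonesBound n d E ε e (3 + k) ^ 2) := by
    refine Finset.sum_le_sum fun k _ => ?_
    rw [show k + 1 + 1 = 2 + k by ring, show k + 1 + 2 = 3 + k by ring, add_comm k 1]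
    generalize jonesBound n d E ε e (1 + k) = p
    generalize jonesBound n d E ε e (2 + k) = q
    generalize jonesBound n d E ε e (3 + k) = r
    nlinarith [sq_nonneg (p - q), sq_nonneg (p - r), sq_nonneg (q - r)]
  rw [← Finset.mul_sum, Finset.sum_add_distrib, Finset.sum_add_distrib] at h3
  have h4 : slowMajorant (10 ^ 5 * ε) (fun k => 1000 * (jonesBound n d E ε e k +
    jonesBound n d E ε e (k + 1) + jonesBound n d E ε e (k + 2))) 0 ^ 2 ≤ 1 := h1
  linarith [h2 1, h2 2, h2 3]

theorem IsReifenbergFlat.exists_flatSystem (h : IsReifenbergFlat n d E P ε) (hE : IsClosed E)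
    (hε : 0 < ε) {χ : ℝ → ℝ} {B : ℝ} (hχ : IsCutoff χ B) (hB : 1 ≤ B)
    (hεK : 2 * 10 ^ 5 * ε * (25 ^ Module.finrank ℝ (V n) * B) ≤ 1 / 10 ^ 6) {M : ℝ}
    (hM : ∀ x ∈ E ∩ ball (0 : V n) 10, ∀ N : ℕ,
      ∑ k ∈ Finset.range N, betaInf n d E x (scale k) ^ 2 ≤ M)
    {L₀ : Submodule ℝ (V n)} (hL₀ : ∀ y ∈ E, ‖y‖ < 10 → ‖perp L₀ y‖ ≤ 10 * ε)
    (hL₀' : ∀ z ∈ L₀, ‖z‖ < 10 → ∃ y ∈ E, ‖y - z‖ ≤ 10 * ε) :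
    ∃ D : FlatSystem (V n) (25 ^ Module.finrank ℝ (V n) * B) (2 * 10 ^ 5 * ε)
        (2 + 36 * 10 ^ 6 * (2 * M + 4)),
      D.E = E ∩ closedBall 0 5 ∧ D.r₀ = 1 / 10 ^ 4 ∧ D.base = L₀ ∧
      ∀ e ∈ D.E, ∀ k y, ‖y - e‖ ≤ 10 * D.r k → perp (D.L k e) (y - e) = 0 →
        ∃ e' ∈ E, ‖y - e'‖ ≤ 2 * 10 ^ 5 * ε * D.r k := by
  have hK : 1 ≤ 25 ^ Module.finrank ℝ (V n) * B :=
    one_le_mul_of_one_le_of_one_le (one_le_pow₀ (by norm_num)) hB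
  have hεδ : 2 * 10 ^ 5 * ε ≤ 1 / 10 ^ 6 := (le_mul_of_one_le_right (by positivity) hK).trans hεK
  have hε' : ε ≤ 1 / 10 ^ 5 := by linarith
  obtain ⟨Λ, hΛ⟩ := h.exists_isPlaneField hE hε hε'
  have hcpt : IsCompact (E ∩ closedBall (0 : V n) 5) :=
    (isCompact_closedBall _ _).inter_left hE
  have hmem : ∀ e ∈ E ∩ closedBall (0 : V n) 5, e ∈ E ∩ ball (0 : V n) 10 := fun e he =>
    ⟨he.1, closedBall_subset_ball (by norm_num) he.2⟩
  choose X θ hX hd h0 h1 heq hsupp hder using fun k : ℕ =>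
    exists_net_partition hχ hcpt (by positivity : (0 : ℝ) < 1 / 10 ^ 4 / 10 ^ k)
  have hnn := fun e i => jonesBound_nonneg (n := n) (d := d) (E := E) hε.le e i
  have hosc := fun e k => le_planeOscillation (n := n) (d := d) (E := E) hε.le e k
  have hle : ∀ e ∈ E ∩ closedBall (0 : V n) 5, ∀ k, planeOscillation n d E ε e k ≤ 2 * 10 ^ 5 * ε :=
    fun e he => planeOscillation_le hε.le (h.jonesBound_le hE hε.le (hmem e he))
  refine ⟨{
    E := E ∩ closedBall 0 5
    r₀ := 1 / 10 ^ 4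
    base := L₀
    L := fun k => Λ (k + 1)
    X := X
    θ := θ
    b := planeOscillation n d E ε
    χ := χ
    one_le_K := hK
    δ_nonneg := by positivity
    δ_mul_K_le := hεK
    r₀_pos := by positivity
    mem_of_mem_X := hX
    θ_diff := hd
    θ_nonneg := h0
    θ_sum_le := h1
    θ_sum_eq := heq
    θ_supp := hsupp
    θ_deriv := hder
    χ_diff := hχ.diff
    χ_nonneg := hχ.nonneg
    χ_le_one := hχ.le_one
    χ_eq_one := hχ.eq_one
    χ_eq_zero := hχ.eq_zero
    χ_deriv := fun x => (hχ.deriv_le x).trans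
      (le_mul_of_one_le_left (by linarith) (one_le_pow₀ (by norm_num)))
    b_nonneg := fun e _ => planeOscillation_nonneg hε.le e
    b_le := hle
    b_le_two_mul := fun e _ k => slowMajorant_le_two_mul
      (fun k => by linarith [hnn e k, hnn e (k + 1), hnn e (k + 2)]) k
    b_sq_sum_le := fun e he => sum_planeOscillation_sq_le hε.le ((hle e he 0).trans (by linarith))
      (sum_jonesBound_sq_le hε.le (by linarith) (hM e (hmem e he)))
    proj_close := fun e he c hc k hce x => by
      have hce' : ‖c - e‖ ≤ scale (k + 1) / 10 := by rw [scale_succ_eq_mul]; linarith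
      refine (hΛ.norm_starProjection_sub_le_of_near hε.le hε' (hmem e he) (hmem c hc) hce' x).trans
        (mul_le_mul_of_nonneg_right ?_ (norm_nonneg x))
      linarith [hosc e k, hnn e k, hnn e (k + 1), hnn e (k + 2)]
    flat := fun e he c hc k hce => by
      have hr : (0 : ℝ) < 1 / 10 ^ 4 / 10 ^ k := by positivity
      have hce' : ‖c - e‖ < scale (k + 1) := by rw [scale_succ_eq_mul]; linarith
      refine (hΛ.norm_perp_le e (hmem e he) (k + 1) c hc.1 hce').trans ?_
      rw [scale_succ_eq_mul, ← mul_assoc]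
      refine mul_le_mul_of_nonneg_right ?_ hr.le
      linarith [hosc e k, hnn e k, hnn e (k + 2)]
    proj_succ := fun e he k x => by
      refine (hΛ.norm_starProjection_succ_sub_le hε.le hε' (hmem e he) (k + 1) x).trans
        (mul_le_mul_of_nonneg_right ?_ (norm_nonneg x))
      linarith [hosc e k, hnn e k, hnn e (k + 1), hnn e (k + 2)]
    proj_zero := fun e he x => by
      refine (hΛ.norm_starProjection_sub_base_le hε.le hε' he.1 (mem_closedBall_zero_iff.1 he.2)
        hL₀ hL₀' x).trans (mul_le_mul_of_nonneg_right ?_ (norm_nonneg x))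
      rw [planeOscillation_zero]
      linarith [hnn e 0, hnn e 1, hnn e 2]
    flat_zero := fun e he => by
      have he5 := mem_closedBall_zero_iff.1 he.2
      rw [planeOscillation_zero]
      linarith [hL₀ e he.1 (by linarith), hnn e 0, hnn e 1, hnn e 2] }, rfl, rfl, rfl, ?_⟩
  intro e he k y hy hperp
  have hr : (0 : ℝ) < 1 / 10 ^ 4 / 10 ^ k := by positivity
  have hy' : ‖y - e‖ ≤ 10 * (1 / 10 ^ 4 / 10 ^ k) := hy
  have hmemL : y - e ∈ Λ (k + 1) e := by
    have h2 : perp (Λ (k + 1) e) (y - e) = 0 := hperp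
    rw [perp_apply, sub_eq_zero] at h2
    rw [h2]
    exact Submodule.starProjection_apply_mem _ _
  obtain ⟨e', he', hd'⟩ := hΛ.fills e (hmem e he) (k + 1) (y - e) hmemL
    (by rw [scale_succ_eq_mul]; linarith)
  refine ⟨e', he', ?_⟩
  rw [add_sub_cancel, norm_sub_rev, scale_succ_eq_mul] at hd'
  refine hd'.trans ?_
  show _ ≤ 2 * 10 ^ 5 * ε * (1 / 10 ^ 4 / 10 ^ k)
  nlinarith [mul_pos hε hr]

end Assembly

/-- **Theorem 1.13**: if `J_∞` is bounded by `M` on `E ∩ B(0,10)`, the Reifenberg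
parameterization is bi-Lipschitz, with constant depending only on `n`, `d`, `M`.
The bound `J_∞(x) = Σ_k β_∞(x,10^{-k})² ≤ M` is expressed via partial sums. -/
theorem thm_1_13 (n d : ℕ) (hd : 0 < d) (hdn : d < n) :
    ∃ ε : ℝ, 0 < ε ∧
    ∀ M : ℝ, ∃ C : ℝ, 1 ≤ C ∧
      ∀ E : Set (V n), IsClosed E → (0 : V n) ∈ E →
      ∀ P : V n → ℝ → Set (V n),
      (∀ x ∈ E ∩ ball (0 : V n) 10, ∀ r : ℝ, 0 < r → r ≤ 10 →
        IsAffinePlane n d (P x r) ∧ x ∈ P x r ∧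
        (∀ y ∈ E ∩ ball x r, infDist y (P x r) ≤ ε * r) ∧
        (∀ y ∈ P x r ∩ ball x r, infDist y E ≤ ε * r)) →
      -- `J_∞(x) ≤ M` on `E ∩ B(0,10)`
      (∀ x ∈ E ∩ ball (0 : V n) 10, ∀ N : ℕ,
        ∑ k ∈ Finset.range N, betaInf n d E x ((10 : ℝ) ^ (-(k : ℤ))) ^ 2 ≤ M) →
      ∃ g : V n → V n, Function.Bijective g ∧
        E ∩ ball (0 : V n) 1 = g '' (P 0 10) ∩ ball (0 : V n) 1 ∧
        ∀ x y : V n,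
          C⁻¹ * dist x y ≤ dist (g x) (g y) ∧ dist (g x) (g y) ≤ C * dist x y := by
  obtain ⟨χ, B, hB, hχ⟩ := exists_isCutoff
  set K : ℝ := 25 ^ Module.finrank ℝ (V n) * B with hK
  have hK0 : 0 < K := by positivity
  have hε : 0 < 1 / (2 * 10 ^ 11 * K) := by positivity
  refine ⟨1 / (2 * 10 ^ 11 * K), hε, fun M => ?_⟩
  set C : ℝ := 6 * Real.exp (2 * 10 ^ 8 * K ^ 2 * |2 + 36 * 10 ^ 6 * (2 * M + 4)|) with hC
  have hC1 : 1 ≤ C := by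
    have := Real.one_le_exp (by positivity : 0 ≤ 2 * 10 ^ 8 * K ^ 2 *
      |2 + 36 * 10 ^ 6 * (2 * M + 4)|)
    linarith
  refine ⟨C, hC1, fun E hE h0E P hP hJ => ?_⟩
  have hR : IsReifenbergFlat n d E P (1 / (2 * 10 ^ 11 * K)) := hP
  obtain ⟨L₀, -, hmem, h1, h2⟩ := hR.exists_direction hE (x := 0) ⟨h0E, mem_ball_self (by norm_num)⟩
    (by norm_num : (0 : ℝ) < 10) le_rfl
  simp only [sub_zero, zero_add] at hmem h1 h2
  obtain ⟨D, hDE, hDr, hDb, hplane⟩ := hR.exists_flatSystem hE hε hχ hB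
    (by rw [← hK]; apply le_of_eq; field_simp) hJ
    (fun y hy hy' => (h1 y hy hy').trans_eq (mul_comm _ _))
    (fun z hz hz' => (h2 z hz hz').imp fun y hy => ⟨hy.1, hy.2.trans_eq (mul_comm _ _)⟩)
  obtain ⟨G, hsurj, hlip, hG⟩ := D.exists_parametrization
  have hDC : 6 * D.distortion = C := rfl
  rw [hDC] at hlip
  have hbase : ∀ z ∈ D.base, ‖z‖ ≤ 2 →
      ∃ e ∈ E, ‖z - e‖ ≤ 2 * 10 ^ 5 * (1 / (2 * 10 ^ 11 * K)) * D.r₀ := fun z hz hz2 => by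
    obtain ⟨y, hy, hyd⟩ := h2 z (hDb ▸ hz) (by linarith)
    refine ⟨y, hy, ?_⟩
    rw [norm_sub_rev, hDr]
    linarith
  refine ⟨G, ⟨fun x y hxy => ?_, hsurj⟩, ?_, fun x y => ?_⟩
  · have h3 := (hlip x y).2
    rw [hxy, sub_self, norm_zero, mul_zero] at h3
    exact sub_eq_zero.1 (norm_le_zero_iff.1 h3)
  · ext x
    constructor
    · rintro ⟨hxE, hx1⟩
      obtain ⟨z, rfl⟩ := hsurj x
      refine ⟨⟨z, (hmem z).2 ?_, rfl⟩, hx1⟩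
      rw [← hDb]
      refine D.mem_base_of_apply_mem hG ?_
      rw [hDE]
      exact ⟨hxE, ball_subset_closedBall (ball_subset_ball (by norm_num) hx1)⟩
    · rintro ⟨⟨z, hz, rfl⟩, hx1⟩
      refine ⟨D.apply_mem_of_mem_base hG hE (by rw [hDE]; exact inter_subset_left)
        (fun e he he5 => by rw [hDE]; exact ⟨he, mem_closedBall_zero_iff.2 he5⟩)
        (by rw [hDr]; norm_num) hbase hplane ?_ (mem_ball_zero_iff.1 hx1), hx1⟩
      rw [hDb]
      exact (hmem z).1 hz
  · rw [dist_eq_norm, dist_eq_norm, inv_mul_le_iff₀ (by linarith)]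
    exact ⟨(hlip x y).2, (hlip x y).1⟩
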